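/- arXiv:1806.06252 — 2 statements merged into one kernel-verified Lean document; each statement's English description precedes it below -/
import Mathlib

section
/- There is an absolute constant δ₀ > 0 with the following property: for every δ̄ > 0 and every compact set K ⊆ ℝ² there is a constant C, depending only on K and δ̄, such that for every pair (u, v) ∈ S(δ̄): u and v are continuously differentiable on K, sup_K |u| ≤ C, sup_K |∇u| ≤ C, ‖∇u(x) − ∇u(y)‖ ≤ C‖x − y‖^{δ₀} for all x, y ∈ K, and the same three bounds hold with u replaced by v. -/
noncomputable section

open MeasureTheory Metric Set
open scoped RealInnerProductSpace

abbrev R2 : Type := EuclideanSpace ℝ (Fin 2)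

/-- `p` is a subgradient of `f` at `x`. -/
def SubgradAt (f : R2 → ℝ) (x p : R2) : Prop :=
  ∀ y : R2, f x + ⟪p, y - x⟫ ≤ f y

/-- `ψ` is a (canonically extended) potential of the optimal transport between `U₁` and `U₂`:
it is convex on `ℝ²`, all its subgradients lie in `closure U₂`, and its gradient map pushes
the Lebesgue measure restricted to `U₁` forward to the Lebesgue measure restricted to `U₂`. -/
def IsOTPotential (U₁ U₂ : Set R2) (ψ : R2 → ℝ) : Prop :=
  ConvexOn ℝ Set.univ ψ ∧
  (∀ x p : R2, SubgradAt ψ x p → p ∈ closure U₂) ∧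
  MeasureTheory.Measure.map (fun x => gradient ψ x) (MeasureTheory.volume.restrict U₁) =
    MeasureTheory.volume.restrict U₂

/-- `S` is a centred section of `w` at `x₀` of height `h`:
`S = {w < w x₀ + p · (· - x₀) + h}` for a slope `p` chosen so that
the centre of mass of `S` is `x₀`. -/
def IsCentredSection (w : R2 → ℝ) (x₀ : R2) (h : ℝ) (S : Set R2) : Prop :=
  ∃ p : R2, S = {x : R2 | w x < w x₀ + ⟪p, x - x₀⟫ + h} ∧
    (∫ x in S, (x - x₀) ∂(MeasureTheory.volume)) = 0

/-- Dilation of `S` about `x₀` by factor `t`. -/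
def dilate (x₀ : R2) (t : ℝ) (S : Set R2) : Set R2 :=
  (fun x => x₀ + t • (x - x₀)) '' S

/-- The (closed) ellipse centred at `0` with half-axis `A` in unit direction `e` and
half-axis `B` in the orthogonal unit direction `f`. -/
def ellipse (e f : R2) (A B : ℝ) : Set R2 :=
  {x : R2 | (⟪x, e⟫ / A) ^ 2 + (⟪x, f⟫ / B) ^ 2 ≤ 1}

/-- `w` is an Alexandrov solution of `det D² w = χ_Ω` in `ℝ²`: the Lebesgue measure of the
subdifferential image of any Borel set `E` equals the Lebesgue measure of `E ∩ Ω`. -/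
def AlexandrovSol (w : R2 → ℝ) (Ω : Set R2) : Prop :=
  ∀ E : Set R2, MeasurableSet E →
    MeasureTheory.volume (⋃ x ∈ E, {p : R2 | SubgradAt w x p}) =
      MeasureTheory.volume (E ∩ Ω)

/-- Membership of the pair `(u, v)` in the normalized family `S(δ̄)`, together with the
associated data: the domains `Ω₁, Ω₂`, and, for each height `h ∈ (0,1]`, the ellipse
`E_h = ellipse (e h) (f h) (L h) (l h)` centred at `0` (long half-axis `L h` in unit
direction `e h`, short half-axis `l h` in the orthogonal unit direction `f h`, area `hπ`,
so `L h * l h = h`), whose perpendicular ellipse is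
`E_h^⊥ = ellipse (f h) (e h) (L h) (l h)`.  The eccentricity is `η_u(h) = L h / l h`. -/
def InSFamily (δb : ℝ) (u v : R2 → ℝ) (Ω₁ Ω₂ : Set R2)
    (L l : ℝ → ℝ) (e f : ℝ → R2) : Prop :=
  ConvexOn ℝ Set.univ u ∧ ConvexOn ℝ Set.univ v ∧
  Convex ℝ Ω₁ ∧ Convex ℝ Ω₂ ∧
  (interior Ω₁).Nonempty ∧ (interior Ω₂).Nonempty ∧
  (0 : R2) ∈ frontier Ω₁ ∧ (0 : R2) ∈ frontier Ω₂ ∧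
  (fun x => gradient u x) '' Ω₁ = Ω₂ ∧ (fun y => gradient v y) '' Ω₂ = Ω₁ ∧
  AlexandrovSol u Ω₁ ∧ u 0 = 0 ∧ SubgradAt u 0 0 ∧
  AlexandrovSol v Ω₂ ∧ v 0 = 0 ∧ SubgradAt v 0 0 ∧
  (∀ y ∈ Ω₂, v y = ⨆ x : R2, (⟪x, y⟫ - u x)) ∧
  L 1 = 1 ∧ l 1 = 1 ∧
  (∀ h : ℝ, h ∈ Set.Ioc (0 : ℝ) 1 →
    ‖e h‖ = 1 ∧ ‖f h‖ = 1 ∧ ⟪e h, f h⟫ = 0 ∧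
    0 < l h ∧ l h ≤ L h ∧ L h * l h = h ∧
    (∃ S : Set R2, IsCentredSection u 0 h S ∧
      (∃ xh : R2, (fun z => xh + δb • z) '' ellipse (e h) (f h) (L h) (l h) ⊆ Ω₁ ∩ S) ∧
      S ⊆ (fun z => δb⁻¹ • z) '' ellipse (e h) (f h) (L h) (l h)) ∧
    (∃ S : Set R2, IsCentredSection v 0 h S ∧
      (∃ yh : R2, (fun z => yh + δb • z) '' ellipse (f h) (e h) (L h) (l h) ⊆ Ω₂ ∩ S) ∧
      S ⊆ (fun z => δb⁻¹ • z) '' ellipse (f h) (e h) (L h) (l h)))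

/-- `z ↦ t • x` cone over `Ω` with vertex `0` (closed): the tangent cone of `Ω` at `0`. -/
def tangentConeZero (Ω : Set R2) : Set R2 :=
  closure {y : R2 | ∃ t : ℝ, 0 ≤ t ∧ ∃ x ∈ Ω, y = t • x}

/-- The planar cross product (determinant) of two vectors. -/
def det2 (a b : R2) : ℝ := a 0 * b 1 - a 1 * b 0

/-- `r` is the unit direction of the right tangent ray of `∂Ω` at `0`:
it lies in the tangent cone of `Ω` at `0` and the whole tangent cone lies
(weakly) counterclockwise from it. -/
def IsRightTangent (Ω : Set R2) (r : R2) : Prop :=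
  ‖r‖ = 1 ∧ r ∈ tangentConeZero Ω ∧ ∀ x ∈ tangentConeZero Ω, 0 ≤ det2 r x

/-- `l` is the unit direction of the left tangent ray of `∂Ω` at `0`:
it lies in the tangent cone of `Ω` at `0` and the whole tangent cone lies
(weakly) clockwise from it. -/
def IsLeftTangent (Ω : Set R2) (l : R2) : Prop :=
  ‖l‖ = 1 ∧ l ∈ tangentConeZero Ω ∧ ∀ x ∈ tangentConeZero Ω, det2 l x ≤ 0

/-- The open cone of direction `e` and opening angle `θ`. -/
def cone2 (e : R2) (θ : ℝ) : Set R2 :=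
  {y : R2 | ∃ lam : ℝ, 0 < lam ∧ ∃ w : R2, ‖w‖ = 1 ∧
    InnerProductGeometry.angle w e < θ ∧ y = lam • w}

lemma R2.inner_eq (x y : R2) : ⟪x, y⟫ = x 0 * y 0 + x 1 * y 1 := by
  simp [PiLp.inner_apply, Fin.sum_univ_two, mul_comm]

lemma ConvexOn.continuous_R2 {f : R2 → ℝ} (hf : ConvexOn ℝ univ f) : Continuous f :=
  hf.locallyLipschitz.continuous

/-- An open convex set of `ℝ² × ℝ` which misses `(x, s)` but contains a point above it lies
above the graph of an affine function through `(x, s)`. -/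
lemma exists_affine_lt_of_notMem {A : Set (R2 × ℝ)} (hA : Convex ℝ A) (hAo : IsOpen A)
    {x : R2} {s t : ℝ} (hs : (x, s) ∉ A) (ht : (x, t) ∈ A) (hst : s < t) :
    ∃ p : R2, ∀ y r, (y, r) ∈ A → s + ⟪p, y - x⟫ < r := by
  obtain ⟨φ, hφ⟩ := geometric_hahn_banach_point_open hA hAo hs
  have split : ∀ y r, φ (y, r) = φ (y, 0) + r * φ (0, 1) := by
    intro y r
    have : ((y, r) : R2 × ℝ) = (y, 0) + r • (0, 1) := by simp
    rw [this, map_add, map_smul, smul_eq_mul]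
  have hσ : 0 < φ (0, 1) := by
    have := hφ _ ht
    rw [split x s, split x t] at this
    nlinarith
  set σ := φ (0, 1) with hσdef
  let ψ : R2 →L[ℝ] ℝ := φ.comp (ContinuousLinearMap.inl ℝ R2 ℝ)
  have hψ : ∀ y, ψ y = φ (y, 0) := fun y => rfl
  let w : R2 := (InnerProductSpace.toDual ℝ R2).symm ψ
  have hw : ∀ y, ⟪w, y⟫ = φ (y, 0) := fun y => by
    rw [← hψ]; exact InnerProductSpace.toDual_symm_apply
  refine ⟨(-σ⁻¹) • w, fun y r hyr => ?_⟩
  have h1 := hφ _ hyr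
  rw [split x s, split y r, ← hw, ← hw] at h1
  rw [real_inner_smul_left, inner_sub_right]
  have h2 : σ * (s + -σ⁻¹ * (⟪w, y⟫ - ⟪w, x⟫)) < σ * r := by
    have : σ * (s + -σ⁻¹ * (⟪w, y⟫ - ⟪w, x⟫)) = σ * s - (⟪w, y⟫ - ⟪w, x⟫) := by
      field_simp; ring
    rw [this]; linarith
  exact lt_of_mul_lt_mul_left h2 hσ.le

lemma ConvexOn.exists_subgradAt {f : R2 → ℝ} (hf : ConvexOn ℝ univ f) (x : R2) :
    ∃ p, SubgradAt f x p := by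
  have hc := hf.continuous_R2
  have hA := hf.convex_strict_epigraph
  have hAo : IsOpen {p : R2 × ℝ | p.1 ∈ univ ∧ f p.1 < p.2} := by
    simp only [mem_univ, true_and]
    exact isOpen_lt (hc.comp continuous_fst) continuous_snd
  obtain ⟨p, hp⟩ := exists_affine_lt_of_notMem (x := x) (s := f x) (t := f x + 1) hA hAo
    (by simp) (by simp) (by linarith)
  refine ⟨p, fun y => ?_⟩
  refine le_of_forall_pos_le_add fun ε hε => ?_
  exact (hp y (f y + ε) (by simp [hε])).le

/-- A slope `p` for which `f - p` is smaller somewhere on a compact set than outside of a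
sublevel set is attained as a subgradient. -/
lemma exists_subgradAt_of_lt {f : R2 → ℝ} (hf : ConvexOn ℝ univ f) {D : Set R2}
    (hD : IsCompact D) {z q p : R2} {c : ℝ} (hc : 0 < c)
    (hout : ∀ y, y ∉ D → f z + ⟪q, y - z⟫ + c ≤ f y)
    (hin : ∀ y ∈ D, ⟪p - q, y - z⟫ < c) :
    ∃ x ∈ D, f x < f z + ⟪q, x - z⟫ + c ∧ SubgradAt f x p := by
  have hcont := hf.continuous_R2
  have hzD : z ∈ D := by
    by_contra h
    have := hout z h
    simp at this
    linarith
  obtain ⟨x, hxD, hx⟩ := hD.exists_isMinOn (f := fun y => f y - ⟪p, y⟫) ⟨z, hzD⟩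
    (by fun_prop)
  have hxz : f x - ⟪p, x⟫ ≤ f z - ⟪p, z⟫ := hx hzD
  have hlt : f x < f z + ⟪q, x - z⟫ + c := by
    have := hin x hxD
    rw [inner_sub_left, inner_sub_right] at this
    linarith
  refine ⟨x, hxD, hlt, ?_⟩
  have hconv : ConvexOn ℝ univ (fun y => f y - ⟪p, y⟫) := by
    have h2 : ConcaveOn ℝ univ (fun y : R2 => ⟪p, y⟫) :=
      ((innerSL ℝ p).toLinearMap).concaveOn convex_univ
    exact hf.sub h2
  have hloc : IsLocalMin (fun y => f y - ⟪p, y⟫) x := by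
    have ho : IsOpen {y | f y < f z + ⟪q, y - z⟫ + c} := by
      apply isOpen_lt hcont
      fun_prop
    filter_upwards [ho.mem_nhds hlt] with y hy
    have hyD : y ∈ D := by
      by_contra h
      exact absurd (hout y h) (not_le.2 hy)
    exact hx hyD
  have hmin := IsMinOn.of_isLocalMin_of_convex_univ hloc hconv
  intro y
  have := hmin y
  rw [inner_sub_right]
  linarith

/-- The set of all subgradients of `f` at points of `E`. -/
def subdiffImage (f : R2 → ℝ) (E : Set R2) : Set R2 := ⋃ x ∈ E, {p : R2 | SubgradAt f x p}

lemma mem_subdiffImage {f : R2 → ℝ} {E : Set R2} {p : R2} :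
    p ∈ subdiffImage f E ↔ ∃ x ∈ E, SubgradAt f x p := by
  simp [subdiffImage]

/-- Coordinate rectangles. -/
def rect (a b c d : ℝ) : Set R2 := {p | p 0 ∈ Icc a b ∧ p 1 ∈ Icc c d}

lemma rect_eq_preimage (a b c d : ℝ) :
    rect a b c d = (MeasurableEquiv.toLp 2 (Fin 2 → ℝ)).symm ⁻¹'
      (Set.pi univ (fun i => Icc (![a, c] i) (![b, d] i))) := by
  ext p
  simp only [rect, mem_ofPred_eq, mem_preimage, mem_univ_pi, Fin.forall_fin_two]
  rfl

lemma isClosed_rect (a b c d : ℝ) : IsClosed (rect a b c d) := by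
  have h0 : Continuous fun p : R2 => p 0 := by fun_prop
  have h1 : Continuous fun p : R2 => p 1 := by fun_prop
  exact (isClosed_Icc.preimage h0).inter (isClosed_Icc.preimage h1)

lemma measurableSet_rect (a b c d : ℝ) : MeasurableSet (rect a b c d) :=
  (isClosed_rect a b c d).measurableSet

lemma volume_rect (a b c d : ℝ) :
    volume (rect a b c d) = ENNReal.ofReal (b - a) * ENNReal.ofReal (d - c) := by
  rw [rect_eq_preimage,
    (EuclideanSpace.volume_preserving_symm_measurableEquiv_toLp (Fin 2)).measure_preimage_equiv,
    volume_pi_pi]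
  simp [Fin.prod_univ_two]

lemma isCompact_rect (a b c d : ℝ) : IsCompact (rect a b c d) := by
  refine Metric.isCompact_of_isClosed_isBounded (isClosed_rect a b c d) ?_
  refine isBounded_iff_forall_norm_le.2 ⟨(|a| + |b|) + (|c| + |d|), fun p hp => ?_⟩
  have h0 : |p 0| ≤ |a| + |b| := by
    rw [abs_le]; constructor <;>
    linarith [hp.1.1, hp.1.2, neg_abs_le a, le_abs_self b, abs_nonneg a, abs_nonneg b]
  have h1 : |p 1| ≤ |c| + |d| := by
    rw [abs_le]; constructor <;>
    linarith [hp.2.1, hp.2.2, neg_abs_le c, le_abs_self d, abs_nonneg c, abs_nonneg d]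
  rw [EuclideanSpace.norm_eq]
  apply Real.sqrt_le_iff.2
  constructor
  · positivity
  · simp [Fin.sum_univ_two]
    rw [← sq_abs (p 0), ← sq_abs (p 1)]
    nlinarith [abs_nonneg (p 0), abs_nonneg (p 1)]

lemma ConvexOn.le_mix {f : R2 → ℝ} (hf : ConvexOn ℝ univ f) (x y : R2) {t : ℝ}
    (h0 : 0 ≤ t) (h1 : t ≤ 1) : f (t • x + (1 - t) • y) ≤ t * f x + (1 - t) * f y := by
  have := hf.2 (mem_univ x) (mem_univ y) h0 (by linarith : 0 ≤ 1 - t) (by ring)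
  simpa using this

/-- The standard triangle with vertices `0`, `e₁`, `e₂`. -/
def stdTriangle : Set R2 := {p | 0 ≤ p 0 ∧ 0 ≤ p 1 ∧ p 0 + p 1 ≤ 1}

lemma le_of_segment_small {f : R2 → ℝ} (hf : ConvexOn ℝ univ f) {θ : ℝ}
    (h0 : f 0 ≤ θ) (h1 : f !₂[1, 0] ≤ θ) {s : ℝ} (hs0 : 0 ≤ s) (hs1 : s ≤ 1) :
    f !₂[s, 0] ≤ θ := by
  have h := hf.le_mix !₂[1, 0] 0 hs0 hs1
  have e : s • (!₂[1, 0] : R2) + (1 - s) • 0 = !₂[s, 0] := by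
    ext i; fin_cases i <;> simp
  rw [e] at h
  nlinarith

lemma le_shear_of_segment_small {f : R2 → ℝ} (hf : ConvexOn ℝ univ f) {θ : ℝ}
    (h0 : f 0 ≤ θ) (h1 : f !₂[1, 0] ≤ θ) (hθ : 0 ≤ θ) {s s' t r : ℝ}
    (hs : s ∈ Icc (1 / 4 : ℝ) (3 / 4)) (hs' : s' ∈ Icc (1 / 4 : ℝ) (3 / 4))
    (hr0 : 0 ≤ r) (hr : r ≤ 1 / 4) : f !₂[s, r * t] ≤ r * f !₂[s', t] + θ := by
  have hr1 : 0 < 1 - r := by linarith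
  obtain ⟨hs1, hs2⟩ := hs
  obtain ⟨hs1', hs2'⟩ := hs'
  have h := hf.le_mix !₂[s', t] !₂[(s - r * s') / (1 - r), 0] hr0 (by linarith : r ≤ 1)
  have e : r • (!₂[s', t] : R2) + (1 - r) • !₂[(s - r * s') / (1 - r), 0] = !₂[s, r * t] := by
    ext i; fin_cases i
    · simp; field_simp; ring
    · simp
  rw [e] at h
  have h2 : f !₂[(s - r * s') / (1 - r), 0] ≤ θ := by
    apply le_of_segment_small hf h0 h1
    · apply div_nonneg _ hr1.le; nlinarith
    · rw [div_le_one hr1]; nlinarith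
  nlinarith

lemma heinz_scale {f : R2 → ℝ} (hf : ConvexOn ℝ univ f) {θ κ t₀ : ℝ}
    (h0 : f 0 ≤ θ) (h1 : f !₂[1, 0] ≤ θ) (hθ : 0 ≤ θ) (ht₀ : 0 < t₀) (ht₀' : t₀ ≤ 1 / 32)
    (hκ : 0 ≤ κ)
    (hm : ∀ E, MeasurableSet E → E ⊆ stdTriangle →
      ENNReal.ofReal κ * volume E ≤ volume (subdiffImage f E)) :
    0 ≤ f !₂[1 / 2, 16 * t₀] / (16 * t₀) - f !₂[1 / 2, t₀ / 4] / (t₀ / 4) + 5 * θ / t₀ ∧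
    κ / 1536 ≤
      (f !₂[1 / 2, 16 * t₀] / (16 * t₀) - f !₂[1 / 2, t₀ / 4] / (t₀ / 4) + 5 * θ / t₀) ^ 2 := by
  set a := f !₂[1 / 2, 16 * t₀] / (16 * t₀) with ha
  set b := f !₂[1 / 2, t₀ / 4] / (t₀ / 4) with hb
  set ε := a - b + 5 * θ / t₀ with hε
  set B := b - 4 * (θ / t₀) with hB
  have hθt : 0 ≤ θ / t₀ := by positivity
  have ha' : f !₂[1 / 2, 16 * t₀] = 16 * t₀ * a := by rw [ha]; field_simp
  have hb' : f !₂[1 / 2, t₀ / 4] = t₀ / 4 * b := by rw [hb]; field_simp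
  have hθ' : θ = t₀ * (θ / t₀) := by field_simp
  have hεB : B + ε = a + θ / t₀ := by rw [hB, hε]; ring
  have upper : ∀ s ∈ Icc (1 / 4 : ℝ) (3 / 4), ∀ t ∈ Icc t₀ (4 * t₀),
      f !₂[s, t] ≤ t * (B + ε) := by
    intro s hs t ht
    have h := le_shear_of_segment_small hf h0 h1 hθ (s := s) (s' := 1 / 2) (t := 16 * t₀)
      (r := t / (16 * t₀)) hs (by constructor <;> norm_num)
      (div_nonneg (by linarith [ht.1]) (by linarith))
      (by rw [div_le_iff₀ (by linarith)]; linarith [ht.2])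
    have e : t / (16 * t₀) * (16 * t₀) = t := by field_simp
    rw [e, ha'] at h
    have e2 : t / (16 * t₀) * (16 * t₀ * a) = t * a := by field_simp
    rw [e2] at h
    rw [hεB]
    have := mul_le_mul_of_nonneg_right ht.1 hθt
    linarith
  have lower : ∀ s ∈ Icc (1 / 4 : ℝ) (3 / 4), ∀ t ∈ Icc t₀ (4 * t₀),
      t * B ≤ f !₂[s, t] := by
    intro s hs t ht
    have htp : 0 < t := by linarith [ht.1]
    have h := le_shear_of_segment_small hf h0 h1 hθ (s := 1 / 2) (s' := s) (t := t)
      (r := t₀ / (4 * t)) (by constructor <;> norm_num) hs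
      (by positivity)
      (by rw [div_le_iff₀ (by linarith)]; linarith [ht.1])
    have e : t₀ / (4 * t) * t = t₀ / 4 := by field_simp
    rw [e, hb'] at h
    have h3 : (t₀ / 4 * b - θ) * (4 * t / t₀) ≤ (t₀ / (4 * t) * f !₂[s, t]) * (4 * t / t₀) := by
      apply mul_le_mul_of_nonneg_right (by linarith) (by positivity)
    have e3 : (t₀ / (4 * t) * f !₂[s, t]) * (4 * t / t₀) = f !₂[s, t] := by field_simp
    have e4 : (t₀ / 4 * b - θ) * (4 * t / t₀) = t * B := by rw [hB]; field_simp
    rw [e3, e4] at h3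
    exact h3
  have hε0 : 0 ≤ ε := by
    have u := upper (1 / 2) (by constructor <;> norm_num) t₀ (by constructor <;> linarith)
    have l := lower (1 / 2) (by constructor <;> norm_num) t₀ (by constructor <;> linarith)
    have : 0 ≤ t₀ * ε := by linarith
    exact nonneg_of_mul_nonneg_right this ht₀
  refine ⟨hε0, ?_⟩
  have hsub : subdiffImage f (rect (3 / 8) (5 / 8) (2 * t₀) (3 * t₀)) ⊆
      rect (-(24 * t₀ * ε)) (24 * t₀ * ε) (B - 4 * ε) (B + 4 * ε) := by
    intro p hp
    obtain ⟨x, ⟨⟨hx1, hx2⟩, hx3, hx4⟩, hpx⟩ := mem_subdiffImage.1 hp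
    have ex : x = !₂[x 0, x 1] := by ext i; fin_cases i <;> simp
    have hsg : ∀ c d : ℝ, f !₂[x 0, x 1] + (p 0 * c + p 1 * d) ≤ f !₂[x 0 + c, x 1 + d] := by
      intro c d
      have := hpx !₂[x 0 + c, x 1 + d]
      rw [R2.inner_eq, ← ex]
        at *
      simpa using this
    have l0 := lower (x 0) ⟨by linarith, by linarith⟩ (x 1) ⟨by linarith, by linarith⟩
    have u1 := upper (x 0 + 1 / 8) ⟨by linarith, by linarith⟩ (x 1 + 0)
      ⟨by linarith, by linarith⟩
    have u2 := upper (x 0 + -(1 / 8)) ⟨by linarith, by linarith⟩ (x 1 + 0)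
      ⟨by linarith, by linarith⟩
    have u3 := upper (x 0 + 0) ⟨by linarith, by linarith⟩ (x 1 + t₀)
      ⟨by linarith, by linarith⟩
    have u4 := upper (x 0 + 0) ⟨by linarith, by linarith⟩ (x 1 + -t₀)
      ⟨by linarith, by linarith⟩
    have g1 := hsg (1 / 8) 0
    have g2 := hsg (-(1 / 8)) 0
    have g3 := hsg 0 t₀
    have g4 := hsg 0 (-t₀)
    have k1 : x 1 * ε ≤ 3 * t₀ * ε := mul_le_mul_of_nonneg_right hx4 hε0
    refine ⟨⟨by linarith, by linarith⟩, ?_, ?_⟩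
    · have : t₀ * (B - 4 * ε) ≤ t₀ * p 1 := by linarith
      exact le_of_mul_le_mul_left this ht₀
    · have : t₀ * p 1 ≤ t₀ * (B + 4 * ε) := by linarith
      exact le_of_mul_le_mul_left this ht₀
  have hmm := (hm (rect (3 / 8) (5 / 8) (2 * t₀) (3 * t₀)) (measurableSet_rect _ _ _ _) (by
    rintro p ⟨⟨h1, h2⟩, h3, h4⟩
    refine ⟨by linarith, by linarith, by linarith⟩)).trans (measure_mono hsub)
  rw [volume_rect, volume_rect, ← ENNReal.ofReal_mul (by norm_num), ← ENNReal.ofReal_mul hκ,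
    ← ENNReal.ofReal_mul (by nlinarith [mul_nonneg ht₀.le hε0])] at hmm
  have hmm2 := (ENNReal.ofReal_le_ofReal_iff (by
    have := mul_nonneg ht₀.le hε0
    apply mul_nonneg <;> linarith)).1 hmm
  have : t₀ * (κ / 1536) ≤ t₀ * ε ^ 2 := by nlinarith
  exact le_of_mul_le_mul_left this ht₀

/-- A nonnegative convex function cannot be almost zero on an edge of the triangle and
have Monge–Ampère measure bounded below inside. -/
lemma heinz {κ : ℝ} (hκ : 0 < κ) : ∃ θ : ℝ, 0 < θ ∧ ∀ f : R2 → ℝ, ConvexOn ℝ univ f →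
    (∀ x, 0 ≤ f x) → f 0 ≤ θ → f !₂[1, 0] ≤ θ → f !₂[0, 1] ≤ 1 →
    ¬ (∀ E, MeasurableSet E → E ⊆ stdTriangle →
      ENNReal.ofReal κ * volume E ≤ volume (subdiffImage f E)) := by
  set c := √(κ / 1536) with hc
  have hcpos : 0 < c := Real.sqrt_pos.2 (by positivity)
  obtain ⟨n, hn⟩ := exists_nat_gt (4 / c)
  have hnc : 4 < n * c := by rwa [div_lt_iff₀ hcpos] at hn
  refine ⟨min 1 (c / (320 * 64 ^ n)), lt_min one_pos (by positivity), ?_⟩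
  intro f hf hf0 h0 h1 h2 hm
  set θ := min 1 (c / (320 * 64 ^ n)) with hθ
  have hθpos : 0 < θ := lt_min one_pos (by positivity)
  have hθ1 : θ ≤ 1 := min_le_left _ _
  have hθ2 : θ * (320 * 64 ^ n) ≤ c := by
    rw [← le_div_iff₀ (by positivity)]; exact min_le_right _ _
  let a : ℕ → ℝ := fun k => f !₂[1 / 2, (64 ^ k)⁻¹ / 2] / ((64 ^ k)⁻¹ / 2)
  have hstep : ∀ k < n, c / 2 ≤ a k - a (k + 1) := by
    intro k hk
    have h64 : (0 : ℝ) < 64 ^ k := by positivity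
    have h64' : (64 : ℝ) ^ k ≤ 64 ^ n := pow_le_pow_right₀ (by norm_num) hk.le
    have h641 : (1 : ℝ) ≤ 64 ^ k := one_le_pow₀ (by norm_num)
    obtain ⟨g1, g2⟩ := heinz_scale hf (t₀ := (64 ^ k)⁻¹ / 32) h0 h1 hθpos.le (by positivity)
      (by have := inv_le_one_of_one_le₀ h641; linarith) hκ.le hm
    have e1 : 16 * ((64 ^ k : ℝ)⁻¹ / 32) = (64 ^ k)⁻¹ / 2 := by ring
    have e2 : ((64 ^ k : ℝ)⁻¹ / 32) / 4 = (64 ^ (k + 1))⁻¹ / 2 := by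
      rw [pow_succ, mul_inv]; ring
    have e3 : 5 * θ / ((64 ^ k : ℝ)⁻¹ / 32) = 160 * θ * 64 ^ k := by field_simp; ring
    rw [e1, e2, e3] at g1 g2
    have g3 : c ≤ a k - a (k + 1) + 160 * θ * 64 ^ k := by
      rw [hc]; exact (Real.sqrt_le_left g1).2 g2
    have : θ * 64 ^ k ≤ θ * 64 ^ n := mul_le_mul_of_nonneg_left h64' hθpos.le
    linarith
  have hsum : ∀ k ≤ n, k * (c / 2) ≤ a 0 - a k := by
    intro k
    induction k with
    | zero => intro _; simp
    | succ k ih =>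
      intro hk
      have := ih (by omega)
      have := hstep k (by omega)
      push_cast
      linarith
  have hn' := hsum n le_rfl
  have ha0 : a 0 ≤ 2 := by
    have h := hf.le_mix !₂[1, 0] !₂[0, 1] (t := 1 / 2) (by norm_num) (by norm_num)
    have e : (1 / 2 : ℝ) • (!₂[1, 0] : R2) + (1 - 1 / 2 : ℝ) • !₂[0, 1] = !₂[1 / 2, 1 / 2] := by
      ext i; fin_cases i <;> norm_num
    rw [e] at h
    simp only [a, pow_zero, inv_one]
    linarith
  have han : 0 ≤ a n := div_nonneg (hf0 _) (by positivity)
  linarith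

/-- `f` is an Alexandrov solution of `det D² f = κ χ_Ω`. -/
def HasMongeAmpere (κ : ℝ) (f : R2 → ℝ) (Ω : Set R2) : Prop :=
  ∀ E : Set R2, MeasurableSet E →
    volume (subdiffImage f E) = ENNReal.ofReal κ * volume (E ∩ Ω)

/-- The linear map sending the standard basis to `(a, b)`. -/
def lin2 (a b : R2) : R2 →ₗ[ℝ] R2 := Matrix.toEuclideanLin !![a 0, b 0; a 1, b 1]

lemma lin2_apply (a b x : R2) : lin2 a b x = x 0 • a + x 1 • b := by
  ext i
  fin_cases i <;> simp [lin2, Matrix.toLpLin_apply, dotProduct, Fin.sum_univ_two] <;>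
    ring

lemma det_lin2 (a b : R2) : LinearMap.det (lin2 a b) = det2 a b := by
  rw [lin2, Matrix.toEuclideanLin_eq_toLin_orthonormal, LinearMap.det_toLin, Matrix.det_fin_two_of,
    det2]
  ring

lemma lin2_bijective {a b : R2} (h : det2 a b ≠ 0) : Function.Bijective (lin2 a b) := by
  have := (LinearMap.equivOfDetNeZero (lin2 a b) (by rwa [det_lin2])).bijective
  exact this

lemma inner_lin2 (a b p x : R2) :
    ⟪p, lin2 a b x⟫ = ⟪lin2 !₂[a 0, b 0] !₂[a 1, b 1] p, x⟫ := by
  simp only [lin2_apply, R2.inner_eq]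
  simp
  ring

lemma det2_transpose (a b : R2) : det2 !₂[a 0, b 0] !₂[a 1, b 1] = det2 a b := by
  simp [det2]; ring

lemma continuous_lin2 (a b : R2) : Continuous (lin2 a b) :=
  LinearMap.continuous_of_finiteDimensional _

lemma ConvexOn.affine_change {f : R2 → ℝ} (hf : ConvexOn ℝ univ f) (m a b q : R2) {s : ℝ}
    (hs : 0 ≤ s) (c : ℝ) :
    ConvexOn ℝ univ (fun x => s * f (m + lin2 a b x) - ⟪q, x⟫ - c) := by
  refine ⟨convex_univ, fun x _ y _ r t hr ht hrt => ?_⟩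
  have h := hf.2 (mem_univ (m + lin2 a b x)) (mem_univ (m + lin2 a b y)) hr ht hrt
  have e : m + lin2 a b (r • x + t • y) = r • (m + lin2 a b x) + t • (m + lin2 a b y) := by
    rw [map_add, map_smul, map_smul, smul_add, smul_add]
    nth_rewrite 1 [← one_smul ℝ m]
    rw [← hrt, add_smul, add_add_add_comm]
  simp only [e, smul_eq_mul, inner_add_right, inner_smul_right] at *
  have h2 := mul_le_mul_of_nonneg_left h hs
  have : c = r * c + t * c := by rw [← add_mul, hrt, one_mul]
  linarith

lemma subgradAt_affine_change {f : R2 → ℝ} {m a b q x p : R2} {s : ℝ} (hs : 0 < s) (c : ℝ)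
    (hd : det2 a b ≠ 0) :
    SubgradAt (fun x => s * f (m + lin2 a b x) - ⟪q, x⟫ - c) x
      (s • lin2 !₂[a 0, b 0] !₂[a 1, b 1] p - q) ↔ SubgradAt f (m + lin2 a b x) p := by
  have key : ∀ y, ⟪s • lin2 !₂[a 0, b 0] !₂[a 1, b 1] p - q, y - x⟫ =
      s * ⟪p, (m + lin2 a b y) - (m + lin2 a b x)⟫ - ⟪q, y⟫ + ⟪q, x⟫ := by
    intro y
    rw [add_sub_add_left_eq_sub, ← map_sub, inner_lin2, inner_sub_left, inner_smul_left,
      inner_sub_right q]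
    simp
    ring
  constructor
  · intro h y
    obtain ⟨z, hz⟩ := (lin2_bijective hd).2 (y - m)
    have h1 := h z
    have e : m + lin2 a b z = y := by rw [hz, add_sub_cancel]
    simp only [key, e] at h1
    have : s * (f (m + lin2 a b x) + ⟪p, y - (m + lin2 a b x)⟫) ≤ s * f y := by linarith
    exact le_of_mul_le_mul_left this hs
  · intro h y
    have := mul_le_mul_of_nonneg_left (h (m + lin2 a b y)) hs.le
    simp only [key]
    linarith

lemma volume_image_affine (m a b : R2) (s : ℝ) (E : Set R2) :
    volume ((fun x => m + s • lin2 a b x) '' E) =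
      ENNReal.ofReal (s ^ 2 * |det2 a b|) * volume E := by
  have e : (fun x => m + s • lin2 a b x) '' E = (fun x => m + x) '' ((s • lin2 a b) '' E) := by
    rw [image_image]; rfl
  rw [e, image_add_left, measure_preimage_add, Measure.addHaar_image_linearMap, LinearMap.det_smul,
    det_lin2, abs_mul]
  simp

lemma HasMongeAmpere.affine_change {f : R2 → ℝ} {Ω : Set R2} {κ : ℝ}
    (h : HasMongeAmpere κ f Ω) (hκ : 0 ≤ κ) (m a b q : R2) {s : ℝ} (hs : 0 < s) (c : ℝ)
    (hd : det2 a b ≠ 0) :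
    HasMongeAmpere (s ^ 2 * det2 a b ^ 2 * κ) (fun x => s * f (m + lin2 a b x) - ⟪q, x⟫ - c)
      ((fun x => m + lin2 a b x) ⁻¹' Ω) := by
  intro E hE
  have hinj : Function.Injective (fun x => m + lin2 a b x) :=
    (add_right_injective m).comp (lin2_bijective hd).1
  have hcont : Continuous (fun x => m + lin2 a b x) := continuous_const.add (continuous_lin2 a b)
  have himg : subdiffImage (fun x => s * f (m + lin2 a b x) - ⟪q, x⟫ - c) E =
      (fun p => -q + s • lin2 !₂[a 0, b 0] !₂[a 1, b 1] p) ''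
        subdiffImage f ((fun x => m + lin2 a b x) '' E) := by
    ext p'
    rw [mem_subdiffImage]
    constructor
    · rintro ⟨x, hx, hp'⟩
      obtain ⟨p, hp⟩ := (lin2_bijective (a := !₂[a 0, b 0]) (b := !₂[a 1, b 1])
        (by rwa [det2_transpose])).2 (s⁻¹ • (p' + q))
      have e : p' = s • lin2 !₂[a 0, b 0] !₂[a 1, b 1] p - q := by
        rw [hp, smul_smul, mul_inv_cancel₀ hs.ne', one_smul, add_sub_cancel_right]
      refine ⟨p, mem_subdiffImage.2 ⟨_, mem_image_of_mem _ hx, ?_⟩, ?_⟩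
      · rw [e] at hp'
        exact (subgradAt_affine_change hs c hd).1 hp'
      · rw [e]; exact neg_add_eq_sub _ _
    · rintro ⟨p, hp, rfl⟩
      obtain ⟨_, ⟨x, hx, rfl⟩, hxp⟩ := mem_subdiffImage.1 hp
      refine ⟨x, hx, ?_⟩
      have := (subgradAt_affine_change (q := q) hs c hd).2 hxp
      rwa [sub_eq_neg_add] at this
  have hEm : MeasurableSet ((fun x => m + lin2 a b x) '' E) :=
    hE.image_of_continuousOn_injOn hcont.continuousOn hinj.injOn
  have hinter : (fun x => m + lin2 a b x) '' E ∩ Ω =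
      (fun x => m + (1 : ℝ) • lin2 a b x) '' (E ∩ (fun x => m + lin2 a b x) ⁻¹' Ω) := by
    simp only [one_smul]
    rw [image_inter_preimage]
  rw [himg, volume_image_affine, h _ hEm, hinter, volume_image_affine, det2_transpose,
    ← mul_assoc, ← mul_assoc, ← ENNReal.ofReal_mul (by positivity),
    ← ENNReal.ofReal_mul (by positivity)]
  congr 2
  rw [← sq_abs (det2 a b)]
  ring

lemma AlexandrovSol.hasMongeAmpere {f : R2 → ℝ} {Ω : Set R2} (h : AlexandrovSol f Ω)
    (hΩ : Convex ℝ Ω) : HasMongeAmpere 1 f (closure Ω) := by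
  intro E hE
  have h1 := h E hE
  rw [ENNReal.ofReal_one, one_mul]
  refine h1.trans (le_antisymm (measure_mono (inter_subset_inter_right _ subset_closure)) ?_)
  have hsub : E ∩ closure Ω ⊆ (E ∩ Ω) ∪ frontier Ω := by
    rintro x ⟨hx, hx2⟩
    by_cases h : x ∈ Ω
    · exact Or.inl ⟨hx, h⟩
    · exact Or.inr ⟨hx2, fun h' => h (interior_subset h')⟩
  calc volume (E ∩ closure Ω) ≤ volume ((E ∩ Ω) ∪ frontier Ω) := measure_mono hsub
    _ ≤ volume (E ∩ Ω) + volume (frontier Ω) := measure_union_le _ _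
    _ = volume (E ∩ Ω) := by rw [hΩ.addHaar_frontier volume, add_zero]

lemma le_two_of_abs_add_le {g : R2 → ℝ} (hg : ConvexOn ℝ univ g) (h0 : g 0 ≤ 2)
    (h1 : g !₂[1, 0] ≤ 2) (h1' : g !₂[-1, 0] ≤ 2) (h2 : g !₂[0, 1] ≤ 2) (h2' : g !₂[0, -1] ≤ 2)
    {x : R2} (hx : |x 0| + |x 1| ≤ 1) : g x ≤ 2 := by
  have hconv : Convex ℝ {x : R2 | g x ≤ 2} := by
    have := hg.convex_le 2
    simpa using this
  have axis : ∀ y z : R2, g y ≤ 2 → g z ≤ 2 → ∀ s t : ℝ, 0 ≤ s → 0 ≤ t → s + t ≤ 1 →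
      g (s • y + t • z) ≤ 2 := by
    intro y z hy hz s t hs ht hst
    rcases eq_or_lt_of_le (add_nonneg hs ht) with h | h
    · have hs' : s = 0 := by linarith
      have ht' : t = 0 := by linarith
      simpa [hs', ht'] using h0
    · have hyz : g ((s / (s + t)) • y + (t / (s + t)) • z) ≤ 2 :=
        hconv hy hz (by positivity) (by positivity) (by field_simp)
      have := hg.le_mix ((s / (s + t)) • y + (t / (s + t)) • z) 0 h.le hst
      have e : (s + t) • ((s / (s + t)) • y + (t / (s + t)) • z) + (1 - (s + t)) • (0 : R2) =
          s • y + t • z := by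
        rw [smul_zero, add_zero, smul_add, smul_smul, smul_smul, mul_div_cancel₀ _ h.ne',
          mul_div_cancel₀ _ h.ne']
      rw [e] at this
      nlinarith
  have e1 : x = |x 0| • !₂[if 0 ≤ x 0 then 1 else -1, 0] +
      |x 1| • !₂[0, if 0 ≤ x 1 then 1 else -1] := by
    ext i
    fin_cases i
    · by_cases h : 0 ≤ x 0
      · simp [h, abs_of_nonneg]
      · simp [h, abs_of_neg (not_le.1 h)]
    · by_cases h : 0 ≤ x 1
      · simp [h, abs_of_nonneg]
      · simp [h, abs_of_neg (not_le.1 h)]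
  rw [e1]
  refine axis _ _ ?_ ?_ _ _ (abs_nonneg _) (abs_nonneg _) hx
  · split_ifs <;> assumption
  · split_ifs <;> assumption

lemma stdTriangle_subset {Ω : Set R2} (hΩ : Convex ℝ Ω) (h0 : (0 : R2) ∈ Ω)
    (h1 : !₂[1, 0] ∈ Ω) (h2 : !₂[0, 1] ∈ Ω) : stdTriangle ⊆ Ω := by
  rintro x ⟨hx0, hx1, hx⟩
  have e : x = x 0 • !₂[1, 0] + x 1 • !₂[0, 1] := by
    ext i; fin_cases i <;> simp
  rw [e]
  rcases eq_or_lt_of_le (add_nonneg hx0 hx1) with h | h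
  · have hs' : x 0 = 0 := by linarith
    have ht' : x 1 = 0 := by linarith
    simpa [hs', ht'] using h0
  · have hyz : (x 0 / (x 0 + x 1)) • !₂[1, 0] + (x 1 / (x 0 + x 1)) • !₂[0, 1] ∈ Ω :=
      hΩ h1 h2 (by positivity) (by positivity) (by field_simp)
    have := hΩ hyz h0 h.le (by linarith : 0 ≤ 1 - (x 0 + x 1)) (by ring)
    rwa [smul_zero, add_zero, smul_add, smul_smul, smul_smul, mul_div_cancel₀ _ h.ne',
          mul_div_cancel₀ _ h.ne'] at this

set_option maxHeartbeats 1000000 in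
open scoped Pointwise in
/-- The contradiction behind the decay of symmetric sections, after normalization. -/
lemma no_flat_normalized {R : ℝ} (hR : 8 ≤ R) : ∃ θ : ℝ, 0 < θ ∧ ∀ (g : R2 → ℝ) (Ω : Set R2)
    (κ : ℝ) (q : R2), ConvexOn ℝ univ g → (∀ x, 0 ≤ g x) → g 0 = 0 →
    g !₂[1, 0] ≤ 2 → g !₂[-1, 0] ≤ 2 → g !₂[0, 1] ≤ 2 → g !₂[0, -1] ≤ 2 →
    g !₂[1, 0] ≤ θ → 0 ≤ κ → HasMongeAmpere κ g Ω → IsClosed Ω → Convex ℝ Ω → (0 : R2) ∈ Ω →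
    !₂[1, 0] ∈ Ω → ¬ (∀ x, x ∉ rect (-R) R (-8) 8 → ⟪q, x⟫ + 1 / 4 ≤ g x) := by
  have hR0 : 0 < R := by linarith
  set c₃ : ℝ := (1 / (8 * R)) ^ 2 * (1 / (512 * R)) with hc₃
  have hc₃0 : 0 < c₃ := by positivity
  obtain ⟨θH, hθH, heinzH⟩ := heinz (κ := c₃ * (c₃ / 2048) / 2) (by positivity)
  refine ⟨min (c₃ / 2048) θH, lt_min (by positivity) hθH, ?_⟩
  intro g Ω κ q hg hg0 hg00 h1 h1' h2 h2' hgθ hκ hMA hΩc hΩ h0Ω h1Ω hout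
  have hθ1 : g !₂[1, 0] ≤ c₃ / 2048 := hgθ.trans (min_le_left _ _)
  have hθ2 : g !₂[1, 0] ≤ θH := hgθ.trans (min_le_right _ _)
  have hle2 : ∀ x : R2, |x 0| + |x 1| ≤ 1 → g x ≤ 2 := fun x hx =>
    le_two_of_abs_add_le hg (by rw [hg00]; norm_num) h1 h1' h2 h2' hx
  set D := rect (-R) R (-8) 8 with hD
  -- the slopes near `q` are attained in `D`
  have hslopes : rect (q 0 - 1 / (16 * R)) (q 0 + 1 / (16 * R)) (q 1 - 1 / 128) (q 1 + 1 / 128) ⊆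
      subdiffImage g D := by
    rintro p ⟨⟨hp1, hp2⟩, hp3, hp4⟩
    obtain ⟨x, hx, -, hxp⟩ := exists_subgradAt_of_lt hg (isCompact_rect (-R) R (-8) 8)
      (z := 0) (q := q) (p := p) (c := 1 / 4) (by norm_num)
      (by intro y hy; have := hout y hy; simpa [hg00] using this)
      (by
        rintro y ⟨⟨hy1, hy2⟩, hy3, hy4⟩
        rw [R2.inner_eq]
        simp only [PiLp.sub_apply, sub_zero]
        have a1 : |p 0 - q 0| ≤ 1 / (16 * R) := abs_le.2 ⟨by linarith, by linarith⟩
        have a2 : |p 1 - q 1| ≤ 1 / 128 := abs_le.2 ⟨by linarith, by linarith⟩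
        have b1 : |y 0| ≤ R := abs_le.2 ⟨by linarith, by linarith⟩
        have b2 : |y 1| ≤ 8 := abs_le.2 ⟨by linarith, by linarith⟩
        have m1 : (p 0 - q 0) * y 0 ≤ 1 / (16 * R) * R := by
          refine (le_abs_self _).trans ?_
          rw [abs_mul]
          exact mul_le_mul a1 b1 (abs_nonneg _) (by positivity)
        have m2 : (p 1 - q 1) * y 1 ≤ 1 / 128 * 8 := by
          refine (le_abs_self _).trans ?_
          rw [abs_mul]
          exact mul_le_mul a2 b2 (abs_nonneg _) (by positivity)
        have e : 1 / (16 * R) * R = 1 / 16 := by field_simp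
        rw [e] at m1
        linarith)
    exact mem_subdiffImage.2 ⟨x, hx, hxp⟩
  have hm1 : ENNReal.ofReal (1 / (512 * R)) ≤ ENNReal.ofReal κ * volume (D ∩ Ω) := by
    rw [← hMA D (measurableSet_rect _ _ _ _)]
    refine le_trans (le_of_eq ?_) (measure_mono hslopes)
    rw [volume_rect, ← ENNReal.ofReal_mul (by ring_nf; positivity)]
    congr 1
    field_simp
    ring
  -- shrink to a small square
  set V := rect (-(1 / 8)) (1 / 8) (-(1 / 8)) (1 / 8) ∩ Ω with hV
  have hVm : MeasurableSet V := (measurableSet_rect _ _ _ _).inter hΩc.measurableSet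
  have hVc : IsCompact V := (isCompact_rect _ _ _ _).inter_right hΩc
  have h0V : (0 : R2) ∈ V := ⟨by norm_num [rect], h0Ω⟩
  have hshrink : (1 / (8 * R)) • (D ∩ Ω) ⊆ V := by
    rintro _ ⟨x, ⟨⟨⟨hx1, hx2⟩, hx3, hx4⟩, hxΩ⟩, rfl⟩
    have hr0 : 0 < 1 / (8 * R) := by positivity
    have hr1 : 1 / (8 * R) ≤ 1 / 64 := one_div_le_one_div_of_le (by norm_num) (by linarith)
    have hrR : 1 / (8 * R) * R = 1 / 8 := by field_simp
    refine ⟨⟨⟨?_, ?_⟩, ?_, ?_⟩, ?_⟩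
    · simp only [PiLp.smul_apply, smul_eq_mul]; nlinarith
    · simp only [PiLp.smul_apply, smul_eq_mul]; nlinarith
    · simp only [PiLp.smul_apply, smul_eq_mul]; nlinarith
    · simp only [PiLp.smul_apply, smul_eq_mul]; nlinarith
    · have := hΩ hxΩ h0Ω hr0.le (by linarith : 0 ≤ 1 - 1 / (8 * R)) (by ring)
      simpa using this
  have hm2 : ENNReal.ofReal c₃ ≤ ENNReal.ofReal κ * volume V := by
    have hvol := measure_mono (μ := volume) hshrink
    rw [Measure.addHaar_smul] at hvol
    have hfin : Module.finrank ℝ R2 = 2 := by simp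
    rw [hfin, abs_of_nonneg (by positivity)] at hvol
    calc ENNReal.ofReal c₃ = ENNReal.ofReal ((1 / (8 * R)) ^ 2) * ENNReal.ofReal (1 / (512 * R)) := by
          rw [hc₃, ENNReal.ofReal_mul (by positivity)]
      _ ≤ ENNReal.ofReal ((1 / (8 * R)) ^ 2) * (ENNReal.ofReal κ * volume (D ∩ Ω)) := by gcongr
      _ = ENNReal.ofReal κ * (ENNReal.ofReal ((1 / (8 * R)) ^ 2) * volume (D ∩ Ω)) := by ring
      _ ≤ _ := by gcongr
  obtain ⟨z, hzV, hz⟩ := hVc.exists_isMaxOn (f := fun x : R2 => |x 1|) ⟨0, h0V⟩ (by fun_prop)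
  set T := |z 1| with hT
  have hT0 : 0 ≤ T := abs_nonneg _
  have hT8 : T ≤ 1 / 8 := abs_le.2 hzV.1.2
  have hVT : ∀ x ∈ V, |x 1| ≤ T := fun x hx => hz hx
  have hVsub : V ⊆ rect (-(1 / 8)) (1 / 8) (-T) T := fun x hx => ⟨hx.1.1, abs_le.1 (hVT x hx)⟩
  have hκT : 2 * c₃ ≤ κ * T := by
    have h := hm2.trans (mul_le_mul_right (measure_mono hVsub) (ENNReal.ofReal κ))
    rw [volume_rect, ← ENNReal.ofReal_mul (by norm_num), ← ENNReal.ofReal_mul hκ,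
      ENNReal.ofReal_le_ofReal_iff (by nlinarith [mul_nonneg hκ hT0])] at h
    nlinarith
  -- push `V` into the middle of the flat edge
  set W := (fun x : R2 => !₂[1 / 2, 0] + (1 / 2 : ℝ) • lin2 !₂[1, 0] !₂[0, 1] x) '' V with hW
  have hid : ∀ x : R2, lin2 !₂[1, 0] !₂[0, 1] x = x := by
    intro x; rw [lin2_apply]; ext i; fin_cases i <;> simp
  have hWΩ : W ⊆ Ω := by
    rintro _ ⟨x, hx, rfl⟩
    have := hΩ h1Ω hx.2 (by norm_num : (0 : ℝ) ≤ 1 / 2) (by norm_num : (0 : ℝ) ≤ 1 / 2)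
      (by norm_num)
    convert this using 1
    simp only [hid]
    ext i; fin_cases i <;> simp
  have hWcont : Continuous fun x : R2 => !₂[1 / 2, 0] + (1 / 2 : ℝ) • lin2 !₂[1, 0] !₂[0, 1] x := by
    have := continuous_lin2 !₂[1, 0] !₂[0, 1]
    fun_prop
  have hWm : MeasurableSet W := (hVc.image hWcont).measurableSet
  have hWvol : volume W = ENNReal.ofReal (1 / 4) * volume V := by
    rw [hW, volume_image_affine]
    congr 2
    simp [det2]; norm_num
  have hlow : ∀ s ∈ Icc (1 / 4 : ℝ) (3 / 4), ∀ t : ℝ, |t| ≤ 1 / 16 →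
      g !₂[s, t] ≤ c₃ / 2048 + 2 * |t| := by
    intro s hs t ht
    have ht1 : 0 < 1 - |t| := by linarith
    have hh := hg.le_mix !₂[0, if 0 ≤ t then 1 else -1] !₂[s / (1 - |t|), 0] (abs_nonneg t)
      (by linarith)
    have e : |t| • (!₂[0, if 0 ≤ t then 1 else -1] : R2) + (1 - |t|) • !₂[s / (1 - |t|), 0] =
        !₂[s, t] := by
      ext i; fin_cases i
      · simp; field_simp
      · by_cases h : 0 ≤ t
        · simp [h, abs_of_nonneg]
        · simp [h, abs_of_neg (not_le.1 h)]
    rw [e] at hh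
    have b1 : g !₂[0, if 0 ≤ t then 1 else -1] ≤ 2 := by split_ifs <;> assumption
    have b2 : g !₂[s / (1 - |t|), 0] ≤ c₃ / 2048 := by
      apply le_of_segment_small hg (by rw [hg00]; positivity) hθ1
      · exact div_nonneg (by linarith [hs.1]) ht1.le
      · rw [div_le_one ht1]; linarith [hs.2]
    have : 0 ≤ c₃ / 2048 := by positivity
    nlinarith [abs_nonneg t]
  set M := c₃ / 2048 + T with hM
  have hWslopes : subdiffImage g W ⊆ rect (-(8 * M)) (8 * M) (-8) 8 := by
    intro p hp
    obtain ⟨_, ⟨y, hy, rfl⟩, hpx⟩ := mem_subdiffImage.1 hp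
    obtain ⟨⟨hy1, hy2⟩, -⟩ := hy.1
    have hy3 := hVT y hy
    set x : R2 := !₂[1 / 2, 0] + (1 / 2 : ℝ) • lin2 !₂[1, 0] !₂[0, 1] y with hx
    have hx0 : x 0 = 1 / 2 + 1 / 2 * y 0 := by rw [hx, hid]; simp
    have hx1 : x 1 = 1 / 2 * y 1 := by rw [hx, hid]; simp
    have hx1T : |x 1| ≤ T / 2 := by rw [hx1, abs_mul]; norm_num; linarith
    have hx0a : 7 / 16 ≤ x 0 := by linarith
    have hx0b : x 0 ≤ 9 / 16 := by linarith
    have hgx := hg0 x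
    have hsg : ∀ c d : ℝ, p 0 * c + p 1 * d ≤ g !₂[x 0 + c, x 1 + d] := by
      intro c d
      have := hpx !₂[x 0 + c, x 1 + d]
      rw [R2.inner_eq] at this
      simp only [PiLp.sub_apply, Matrix.cons_val_zero, Matrix.cons_val_one] at this
      linarith
    have g1 := hsg (1 / 8) 0
    have g2 := hsg (-(1 / 8)) 0
    have g3 := hsg 0 (1 / 4)
    have g4 := hsg 0 (-(1 / 4))
    have ha := abs_le.1 (hx1T.trans (by linarith : T / 2 ≤ 1 / 16))
    have u1 := hlow (x 0 + 1 / 8) ⟨by linarith, by linarith⟩ (x 1 + 0)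
      (by rw [add_zero]; linarith)
    have u2 := hlow (x 0 + -(1 / 8)) ⟨by linarith, by linarith⟩ (x 1 + 0)
      (by rw [add_zero]; linarith)
    rw [add_zero] at u1 u2 g1 g2
    have u3 := hle2 !₂[x 0 + 0, x 1 + 1 / 4] (by
      simp
      rw [abs_of_nonneg (by linarith : 0 ≤ x 0), abs_of_nonneg (by linarith)]
      linarith)
    have u4 := hle2 !₂[x 0 + 0, x 1 + -(1 / 4)] (by
      simp
      rw [abs_of_nonneg (by linarith : 0 ≤ x 0), abs_of_nonpos (by linarith)]
      linarith)
    exact ⟨⟨by linarith, by linarith⟩, by linarith, by linarith⟩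
  have hm3 : c₃ / 4 ≤ 256 * M := by
    have hM0 : 0 ≤ M := by positivity
    have h := hMA W hWm
    rw [inter_eq_left.2 hWΩ, hWvol] at h
    have h2 := measure_mono (μ := volume) hWslopes
    rw [h, volume_rect, ← ENNReal.ofReal_mul (by linarith)] at h2
    have h3 : ENNReal.ofReal (1 / 4 * c₃) ≤ ENNReal.ofReal ((8 * M - -(8 * M)) * (8 - -8)) := by
      calc ENNReal.ofReal (1 / 4 * c₃) = ENNReal.ofReal (1 / 4) * ENNReal.ofReal c₃ :=
            ENNReal.ofReal_mul (by norm_num)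
        _ ≤ ENNReal.ofReal (1 / 4) * (ENNReal.ofReal κ * volume V) := by gcongr
        _ = ENNReal.ofReal κ * (ENNReal.ofReal (1 / 4) * volume V) := by ring
        _ ≤ _ := h2
    rw [ENNReal.ofReal_le_ofReal_iff (by linarith)] at h3
    linarith
  have hTlow : c₃ / 2048 ≤ T := by linarith
  have hTpos : 0 < T := lt_of_lt_of_le (by positivity) hTlow
  have hdet : det2 !₂[1, 0] z = z 1 := by simp [det2]
  have hdet0 : det2 !₂[1, 0] z ≠ 0 := by rw [hdet]; exact abs_pos.1 hTpos
  -- Heinz in the coordinates `(e₁, z)`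
  refine heinzH (fun x => 1 / 2 * g (0 + lin2 !₂[1, 0] z x) - ⟪(0 : R2), x⟫ - 0)
    (hg.affine_change 0 _ _ 0 (by norm_num) 0) (fun x => ?_) ?_ ?_ ?_ ?_
  · simpa using hg0 _
  · simpa [hg00] using hθH.le
  · have e : lin2 !₂[1, 0] z !₂[1, 0] = !₂[1, 0] := by rw [lin2_apply]; simp
    simp only [e, zero_add, inner_zero_left, sub_zero]
    have := hg0 !₂[1, 0]
    linarith
  · have e : lin2 !₂[1, 0] z !₂[0, 1] = z := by rw [lin2_apply]; simp
    simp only [e, zero_add, inner_zero_left, sub_zero]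
    have := hle2 z (by have := abs_le.2 hzV.1.1; linarith)
    linarith
  · intro E hE hEsub
    rw [hMA.affine_change hκ 0 _ _ 0 (by norm_num) 0 hdet0 E hE]
    have hsub : E ⊆ (fun x => 0 + lin2 !₂[1, 0] z x) ⁻¹' Ω := by
      refine hEsub.trans (stdTriangle_subset ?_ ?_ ?_ ?_)
      · simp only [zero_add]
        exact hΩ.linear_preimage (lin2 !₂[1, 0] z)
      · simpa using h0Ω
      · simpa [lin2_apply] using h1Ω
      · simpa [lin2_apply] using hzV.2
    rw [inter_eq_left.2 hsub]
    gcongr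
    rw [hdet, ← sq_abs (z 1), ← hT]
    have := mul_le_mul hκT hTlow (by positivity) (by linarith)
    linarith

/-- Twice the even part of `g`. -/
def symSum (g : R2 → ℝ) (y : R2) : ℝ := g y + g (-y)

lemma symSum_neg (g : R2 → ℝ) (y : R2) : symSum g (-y) = symSum g y := by
  simp [symSum, add_comm]

lemma ConvexOn.symSum {g : R2 → ℝ} (hg : ConvexOn ℝ univ g) : ConvexOn ℝ univ (symSum g) := by
  refine hg.add ?_
  have := hg.comp_linearMap (-LinearMap.id : R2 →ₗ[ℝ] R2)
  exact this

lemma ConvexOn.smul_le {g : R2 → ℝ} (hg : ConvexOn ℝ univ g) (h0 : g 0 = 0) {t : ℝ}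
    (ht0 : 0 ≤ t) (ht1 : t ≤ 1) (y : R2) : g (t • y) ≤ t * g y := by
  have := hg.le_mix y 0 ht0 ht1
  simpa [h0] using this

lemma zero_notMem_hull {g : R2 → ℝ} (hg : ConvexOn ℝ univ g) (hg0 : ∀ x, 0 ≤ g x)
    (h0 : g 0 = 0) :
    ((0 : R2), (1 / 4 : ℝ)) ∉ convexHull ℝ
      ({x : R2 × ℝ | 2 < symSum g ((1 / 8 : ℝ) • x.1) ∧ g x.1 < x.2} ∪
        {x : R2 × ℝ | g x.1 + 1 / 2 < x.2}) := by
  intro hmem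
  obtain ⟨ι, _, z, w, hz, hind, hw, hw1, hwz⟩ := eq_pos_convex_span_of_mem_convexHull hmem
  classical
  have hcard : Fintype.card ι ≤ 4 := by
    have h := hind.card_le_finrank_succ
    have h2 : Module.finrank ℝ (vectorSpan ℝ (range z)) ≤ Module.finrank ℝ (R2 × ℝ) :=
      Submodule.finrank_le _
    have h3 : Module.finrank ℝ (R2 × ℝ) = 3 := by simp
    omega
  have hz' : ∀ i, (2 < symSum g ((1 / 8 : ℝ) • (z i).1) ∧ g (z i).1 < (z i).2) ∨
      g (z i).1 + 1 / 2 < (z i).2 := fun i => hz (mem_range_self i)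
  have hsum1 : ∑ i, w i • (z i).1 = 0 := by
    have := congrArg Prod.fst hwz
    simpa [Prod.fst_sum] using this
  have hsum2 : ∑ i, w i * (z i).2 = 1 / 4 := by
    have := congrArg Prod.snd hwz
    simpa [Prod.snd_sum] using this
  set out : Finset ι := Finset.univ.filter fun i => 2 < symSum g ((1 / 8 : ℝ) • (z i).1) with hout
  have hpt : ∀ i, w i * g (z i).1 + (if i ∈ out then 0 else w i * (1 / 2)) ≤ w i * (z i).2 := by
    intro i
    have hwi := hw i
    split_ifs with hi
    · have : g (z i).1 ≤ (z i).2 := by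
        rcases hz' i with h | h <;> linarith
      nlinarith
    · have : g (z i).1 + 1 / 2 < (z i).2 := by
        rcases hz' i with h | h
        · exact absurd (hout ▸ Finset.mem_filter.2 ⟨Finset.mem_univ i, h.1⟩ : i ∈ out) hi
        · exact h
      nlinarith
  have htot := Finset.sum_le_sum (s := Finset.univ) fun i _ => hpt i
  rw [hsum2, Finset.sum_add_distrib] at htot
  have hsplit : ∑ i, (if i ∈ out then 0 else w i * (1 / 2)) = 1 / 2 - 1 / 2 * ∑ i ∈ out, w i := by
    have e : ∀ i, (if i ∈ out then 0 else w i * (1 / 2)) =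
        1 / 2 * w i - 1 / 2 * (if i ∈ out then w i else 0) := by
      intro i; split_ifs <;> ring
    rw [Finset.sum_congr rfl fun i _ => e i, Finset.sum_sub_distrib, ← Finset.mul_sum,
      ← Finset.mul_sum, hw1, Finset.sum_ite_mem, Finset.univ_inter, mul_one]
  rw [hsplit] at htot
  have hgsum : 0 ≤ ∑ i, w i * g (z i).1 :=
    Finset.sum_nonneg fun i _ => mul_nonneg (hw i).le (hg0 _)
  have hne : out.Nonempty := by
    rw [Finset.nonempty_iff_ne_empty]
    intro h
    rw [h] at htot
    simp at htot
    linarith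
  obtain ⟨i, hi, hwi⟩ : ∃ i ∈ out, 1 / 8 ≤ w i := by
    apply Finset.exists_le_of_sum_le hne
    rw [Finset.sum_const, nsmul_eq_mul]
    have : (out.card : ℝ) ≤ 4 := by exact_mod_cast (Finset.card_le_univ _).trans hcard
    linarith
  have hiG : 2 < symSum g ((1 / 8 : ℝ) • (z i).1) := (Finset.mem_filter.1 hi).2
  set y := (z i).1 with hy
  set r := w i with hr
  have hJ : g (-(r • y)) ≤ ∑ j, w j * g (if j = i then 0 else (z j).1) := by
    have := hg.map_sum_le (t := Finset.univ) (w := w) (p := fun j => if j = i then 0 else (z j).1)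
      (fun j _ => (hw j).le) hw1 (fun _ _ => mem_univ _)
    have e : ∑ j, w j • (if j = i then (0 : R2) else (z j).1) = -(r • y) := by
      have e1 : ∀ j, w j • (if j = i then (0 : R2) else (z j).1) =
          w j • (z j).1 - (if j = i then w j • (z j).1 else 0) := by
        intro j; split_ifs <;> simp
      rw [Finset.sum_congr rfl fun j _ => e1 j, Finset.sum_sub_distrib, hsum1]
      simp [hy, hr]
    simp only [e, smul_eq_mul] at this
    exact this
  have hJ2 : ∑ j, w j * g (if j = i then 0 else (z j).1) = ∑ j, w j * g (z j).1 - r * g y := by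
    have e1 : ∀ j, w j * g (if j = i then 0 else (z j).1) =
        w j * g (z j).1 - (if j = i then w j * g (z j).1 else 0) := by
      intro j; split_ifs <;> simp [h0]
    rw [Finset.sum_congr rfl fun j _ => e1 j, Finset.sum_sub_distrib]
    simp [hy, hr]
  have hr1 : r ≤ 1 := by
    rw [← hw1]; exact Finset.single_le_sum (fun j _ => (hw j).le) (Finset.mem_univ i)
  have k1 := hg.smul_le h0 (t := 1 / 8) (by norm_num) (by norm_num) y
  have k2 : g (-((1 / 8 : ℝ) • y)) ≤ 1 / (8 * r) * g (-(r • y)) := by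
    have hr0 : 0 < r := hw i
    have := hg.smul_le h0 (t := 1 / (8 * r)) (by positivity)
      (by rw [div_le_one (by positivity)]; linarith) (-(r • y))
    have e : (1 / (8 * r)) • (-(r • y)) = -((1 / 8 : ℝ) • y) := by
      rw [smul_neg, smul_smul]; congr 2; field_simp
    rwa [e] at this
  have hr0 : 0 < r := hw i
  have k3 : 8 * r * g (-((1 / 8 : ℝ) • y)) ≤ g (-(r • y)) := by
    have := mul_le_mul_of_nonneg_left k2 (by positivity : 0 ≤ 8 * r)
    have e : 8 * r * (1 / (8 * r) * g (-(r • y))) = g (-(r • y)) := by field_simp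
    rwa [e] at this
  have hG : 2 < g ((1 / 8 : ℝ) • y) + g (-((1 / 8 : ℝ) • y)) := hiG
  have p1 := hg0 ((1 / 8 : ℝ) • y)
  have p2 := hg0 (-((1 / 8 : ℝ) • y))
  have p3 : 0 ≤ ∑ i ∈ out, w i := Finset.sum_nonneg fun j _ => (hw j).le
  have p4 : ∑ i ∈ out, w i ≤ 1 := by
    rw [← hw1]
    exact Finset.sum_le_sum_of_subset_of_nonneg (Finset.subset_univ _) fun j _ _ => (hw j).le
  nlinarith

/-- A slope which is balanced with respect to the symmetric section of height one. -/
lemma exists_balanced_slope {g : R2 → ℝ} (hg : ConvexOn ℝ univ g) (hg0 : ∀ x, 0 ≤ g x)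
    (h0 : g 0 = 0) : ∃ q : R2,
      (∀ y, 2 < symSum g ((1 / 8 : ℝ) • y) → ⟪q, y⟫ + 1 / 4 ≤ g y) ∧
      ∀ y, ⟪q, y⟫ - 1 / 4 ≤ g y := by
  have hgc := hg.continuous_R2
  have hsc := hg.symSum.continuous_R2
  have hopen : IsOpen ({x : R2 × ℝ | 2 < symSum g ((1 / 8 : ℝ) • x.1) ∧ g x.1 < x.2} ∪
        {x : R2 × ℝ | g x.1 + 1 / 2 < x.2}) := by
    refine IsOpen.union (IsOpen.and ?_ ?_) ?_
    · exact isOpen_lt continuous_const (by fun_prop)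
    · exact isOpen_lt (by fun_prop) (by fun_prop)
    · exact isOpen_lt (by fun_prop) (by fun_prop)
  obtain ⟨q, hq⟩ := exists_affine_lt_of_notMem (x := 0) (s := 1 / 4) (t := 1)
    (convex_convexHull ℝ _) hopen.convexHull (zero_notMem_hull hg hg0 h0)
    (subset_convexHull ℝ _ (Or.inr (by simp [h0]; norm_num))) (by norm_num)
  refine ⟨q, fun y hy => le_of_forall_pos_le_add fun ε hε => ?_,
    fun y => le_of_forall_pos_le_add fun ε hε => ?_⟩
  · have := hq y (g y + ε) (subset_convexHull ℝ _ (Or.inl ⟨hy, by simp [hε]⟩))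
    rw [sub_zero] at this
    linarith
  · have := hq y (g y + 1 / 2 + ε) (subset_convexHull ℝ _ (Or.inr (by simp [hε])))
    rw [sub_zero] at this
    linarith

lemma exists_separating_slope {g : R2 → ℝ} (hg : ConvexOn ℝ univ g) (h0 : g 0 = 0) {x : R2}
    (hx : 2 < symSum g x) :
    ∃ ξ : R2, (∀ y, symSum g y ≤ 2 → |⟪ξ, y⟫| ≤ 1) ∧ 1 < ⟪ξ, x⟫ := by
  have hconv : Convex ℝ {y | symSum g y ≤ 2} := by simpa using hg.symSum.convex_le 2
  have hclosed : IsClosed {y | symSum g y ≤ 2} :=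
    isClosed_le hg.symSum.continuous_R2 continuous_const
  obtain ⟨φ, c, hφ, hc⟩ := geometric_hahn_banach_closed_point hconv hclosed
    (by simpa using hx : x ∉ {y | symSum g y ≤ 2})
  have hc0 : 0 < c := by
    have := hφ 0 (by simp [symSum, h0])
    simpa using this
  let v : R2 := (InnerProductSpace.toDual ℝ R2).symm φ
  have hv : ∀ y, ⟪v, y⟫ = φ y := fun y => InnerProductSpace.toDual_symm_apply
  have hle : ∀ y, symSum g y ≤ 2 → ⟪c⁻¹ • v, y⟫ ≤ 1 := by
    intro y hy
    have := hφ y hy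
    rw [inner_smul_left, hv]
    simp only [conj_trivial]
    rw [inv_mul_le_one₀ hc0]
    exact this.le
  refine ⟨c⁻¹ • v, fun y hy => abs_le.2 ⟨?_, hle y hy⟩, ?_⟩
  · have := hle (-y) (by rwa [symSum_neg])
    rw [inner_neg_right] at this
    linarith
  · rw [inner_smul_left, hv]
    simp only [conj_trivial]
    rwa [lt_inv_mul_iff₀ hc0, mul_one]

/-- If the symmetric section of height one is much longer than the one of height `θ`, then the
domain contains a point at which `g` is small, but which is not small for the section. -/
lemma exists_flat_point {g : R2 → ℝ} {Ω : Set R2} {κ θ R : ℝ} {q w : R2}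
    (hg : ConvexOn ℝ univ g) (hg0 : ∀ x, 0 ≤ g x) (h0 : g 0 = 0)
    (hMA : HasMongeAmpere κ g Ω) (hΩ : Convex ℝ Ω) (h0Ω : (0 : R2) ∈ Ω)
    (hbdd : ∀ y, symSum g y ≤ 2 → ‖y‖ ≤ R)
    (hq : ∀ y, 2 < symSum g ((1 / 8 : ℝ) • y) → ⟪q, y⟫ + 1 / 4 ≤ g y)
    (hq' : ∀ y, ⟪q, y⟫ - 1 / 4 ≤ g y) (hqw : 0 ≤ ⟪q, w⟫)
    (hθ : 0 < θ) (hθ' : θ ≤ 1 / 768) (hw : symSum g w ≤ 2 * θ) (hw2 : 2 < symSum g ((2 : ℝ) • w)) :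
    ∃ a ∈ Ω, g a ≤ θ ∧ symSum g a ≤ 2 ∧ ∀ t : ℝ, symSum g (t • a) ≤ 2 → |t| ≤ 6144 := by
  have hs0 : symSum g 0 = 0 := by simp [symSum, h0]
  obtain ⟨ξ, hξ, hξw⟩ := exists_separating_slope hg h0 hw2
  rw [inner_smul_right] at hξw
  set B : R2 := q + (1 / 64 : ℝ) • ξ with hB
  have hBi : ∀ y, ⟪B, y⟫ = ⟪q, y⟫ + 1 / 64 * ⟪ξ, y⟫ := by
    intro y; rw [hB, inner_add_left, real_inner_smul_left]
  have hBw : 1 / 128 ≤ ⟪B, w⟫ := by rw [hBi]; linarith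
  have hBle : ∀ y, symSum g y ≤ 2 → ⟪B, y⟫ ≤ 3 := by
    intro y hy
    have h1 := hq' y
    have h2 := (abs_le.1 (hξ y hy)).2
    have h3 : g y + g (-y) ≤ 2 := hy
    have h4 := hg0 (-y)
    rw [hBi]
    linarith
  have hBabs : ∀ y, symSum g y ≤ 2 → |⟪B, y⟫| ≤ 3 := by
    intro y hy
    refine abs_le.2 ⟨?_, hBle y hy⟩
    have := hBle (-y) (by rwa [symSum_neg])
    rw [inner_neg_right] at this
    linarith
  have hBout : ∀ y, 2 < symSum g ((1 / 8 : ℝ) • y) → ⟪B, y⟫ ≤ g y := by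
    intro y hy
    by_cases hξy : ⟪ξ, y⟫ ≤ 16
    · have := hq y hy
      rw [hBi]; linarith
    · push Not at hξy
      have hpos : 0 < ⟪ξ, y⟫ := by linarith
      set t := 16 / ⟪ξ, y⟫ with ht
      have ht0 : 0 < t := by positivity
      have ht1 : t ≤ 1 := by rw [ht, div_le_one hpos]; linarith
      have htξ : t * ⟪ξ, y⟫ = 16 := by rw [ht]; field_simp
      have hout : 2 < symSum g ((1 / 8 : ℝ) • (t • y)) := by
        by_contra hcon
        have := (abs_le.1 (hξ _ (not_lt.1 hcon))).2
        rw [inner_smul_right, inner_smul_right, htξ] at this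
        norm_num at this
      have h1 := hq _ hout
      have h2 := hg.smul_le h0 ht0.le ht1 y
      rw [inner_smul_right] at h1
      have h3 : t * ⟪B, y⟫ ≤ t * g y := by rw [hBi]; linarith
      exact le_of_mul_le_mul_left h3 ht0
  have hBw0 : 0 < ⟪B, w⟫ := by linarith
  set τ := 6 * θ / ⟪B, w⟫ with hτ
  have hτ0 : 0 < τ := by positivity
  have hτ1 : τ ≤ 1 := by rw [hτ, div_le_one hBw0]; linarith
  have hτw : τ * ⟪B, w⟫ = 6 * θ := by rw [hτ]; field_simp
  have hgw : g w ≤ 2 * θ := by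
    have h3 : g w + g (-w) ≤ 2 * θ := hw
    have := hg0 (-w)
    linarith
  set D : Set R2 := {y | symSum g ((1 / 8 : ℝ) • y) ≤ 2} with hD
  have hsc := hg.symSum.continuous_R2
  have hDclosed : IsClosed D := isClosed_le (by fun_prop) continuous_const
  have hDnorm : ∀ y ∈ D, ‖y‖ ≤ 8 * R := by
    intro y hy
    have := hbdd _ hy
    rw [norm_smul] at this
    norm_num at this
    linarith
  have hDc : IsCompact D := Metric.isCompact_of_isClosed_isBounded hDclosed
    (isBounded_iff_forall_norm_le.2 ⟨_, hDnorm⟩)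
  have hR0 : 0 ≤ R := by
    have := hbdd 0 (by rw [hs0]; norm_num)
    simpa using this
  set E : Set R2 := {y | y ∈ D ∧ g y < 3 * θ + τ * (⟪B, y⟫ - ⟪B, w⟫)} with hE
  have hgc := hg.continuous_R2
  have hEm : MeasurableSet E := by
    refine hDclosed.measurableSet.inter (IsOpen.measurableSet ?_)
    exact isOpen_lt hgc (by fun_prop)
  set N := 8 * R + ‖w‖ + 1 with hN
  have hN0 : 0 < N := by positivity
  have hball : ball (τ • B) (θ / N) ⊆ subdiffImage g E := by
    intro p hp
    rw [mem_ball, dist_eq_norm] at hp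
    obtain ⟨x, hx, hxlt, hxp⟩ := exists_subgradAt_of_lt hg hDc (z := w) (q := τ • B) (p := p)
      (c := 3 * θ - g w) (by linarith)
      (by
        intro y hy
        have hyG : 2 < symSum g ((1 / 8 : ℝ) • y) := not_le.1 hy
        have h1 := hBout y hyG
        have h2 := hg0 y
        rw [real_inner_smul_left, inner_sub_right]
        by_cases hs : 0 ≤ ⟪B, y⟫
        · nlinarith
        · push Not at hs
          nlinarith)
      (by
        intro y hy
        calc ⟪p - τ • B, y - w⟫ ≤ ‖p - τ • B‖ * ‖y - w‖ := real_inner_le_norm _ _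
          _ ≤ θ / N * (8 * R + ‖w‖) := by
            refine mul_le_mul hp.le ?_ (norm_nonneg _) (by positivity)
            exact (norm_sub_le _ _).trans (by linarith [hDnorm y hy])
          _ < θ / N * N := by
            apply mul_lt_mul_of_pos_left _ (by positivity)
            rw [hN]; linarith
          _ = θ := by field_simp
          _ ≤ 3 * θ - g w := by linarith)
    refine mem_subdiffImage.2 ⟨x, ⟨hx, ?_⟩, hxp⟩
    rw [real_inner_smul_left, inner_sub_right] at hxlt
    linarith
  obtain ⟨c, ⟨hcD, hc⟩, hcΩ⟩ : (E ∩ Ω).Nonempty := by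
    by_contra hne
    rw [not_nonempty_iff_eq_empty] at hne
    have h1 := hMA E hEm
    rw [hne, measure_empty, mul_zero] at h1
    have h2 := measure_mono_null hball h1
    exact (measure_ball_pos volume (τ • B) (by positivity : 0 < θ / N)).ne' h2
  have hc' : g c < τ * ⟪B, c⟫ - 3 * θ := by linarith
  have hgc0 := hg0 c
  have hBc : ⟪B, w⟫ / 2 < ⟪B, c⟫ := by
    have : τ * (⟪B, w⟫ / 2) < τ * ⟪B, c⟫ := by linarith
    exact lt_of_mul_lt_mul_left this hτ0.le
  have hBc0 : 0 < ⟪B, c⟫ := by linarith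
  set t := ⟪B, w⟫ / (2 * ⟪B, c⟫) with ht
  have ht0 : 0 < t := by positivity
  have ht1 : t ≤ 1 := by rw [ht, div_le_one (by positivity)]; linarith
  have htc : t * ⟪B, c⟫ = ⟪B, w⟫ / 2 := by rw [ht]; field_simp
  have hga := hg.smul_le h0 (t := t / 8) (by positivity) (by linarith) c
  refine ⟨(t / 8) • c, ?_, ?_, ?_, ?_⟩
  · have := hΩ hcΩ h0Ω (by positivity : 0 ≤ t / 8) (by linarith : 0 ≤ 1 - t / 8) (by ring)
    simpa using this
  · nlinarith
  · have h1 := hg.symSum.smul_le hs0 ht0.le ht1 ((1 / 8 : ℝ) • c)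
    rw [smul_smul] at h1
    have e : t * (1 / 8) = t / 8 := by ring
    rw [e] at h1
    have h2 : symSum g ((1 / 8 : ℝ) • c) ≤ 2 := hcD
    nlinarith
  · intro s hs
    have h1 := hBabs _ hs
    rw [inner_smul_right, inner_smul_right, abs_mul] at h1
    have h2 : t / 8 * ⟪B, c⟫ = ⟪B, w⟫ / 16 := by linarith
    rw [h2, abs_of_pos (by positivity : 0 < ⟪B, w⟫ / 16)] at h1
    have h3 : |s| * (1 / 2048) ≤ |s| * (⟪B, w⟫ / 16) :=
      mul_le_mul_of_nonneg_left (by linarith) (abs_nonneg s)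
    linarith

lemma symSum_decay : ∃ θ : ℝ, 0 < θ ∧ θ ≤ 1 / 4 ∧ ∀ (g : R2 → ℝ) (Ω : Set R2) (κ R : ℝ) (w : R2),
    ConvexOn ℝ univ g → (∀ x, 0 ≤ g x) → g 0 = 0 → 0 ≤ κ → HasMongeAmpere κ g Ω → IsClosed Ω →
    Convex ℝ Ω → (0 : R2) ∈ Ω → (∀ y, symSum g y ≤ 2 → ‖y‖ ≤ R) → symSum g w ≤ 2 * θ →
    symSum g ((2 : ℝ) • w) ≤ 2 := by
  obtain ⟨θ₀, hθ₀, hN⟩ := no_flat_normalized (R := 98304) (by norm_num)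
  refine ⟨min θ₀ (1 / 768), lt_min hθ₀ (by norm_num), (min_le_right _ _).trans (by norm_num), ?_⟩
  intro g Ω κ R w hg hg0 h0 hκ hMA hΩc hΩ h0Ω hbdd hw
  by_contra! hw2
  have hs0 : symSum g 0 = 0 := by simp [symSum, h0]
  obtain ⟨q, hq, hq'⟩ := exists_balanced_slope hg hg0 h0
  obtain ⟨a, haΩ, hga, hGa, hta⟩ : ∃ a ∈ Ω, g a ≤ min θ₀ (1 / 768) ∧ symSum g a ≤ 2 ∧
      ∀ t : ℝ, symSum g (t • a) ≤ 2 → |t| ≤ 6144 := by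
    rcases le_total 0 ⟪q, w⟫ with h | h
    · exact exists_flat_point hg hg0 h0 hMA hΩ h0Ω hbdd hq hq' h
        (lt_min hθ₀ (by norm_num)) (min_le_right _ _) hw hw2
    · exact exists_flat_point hg hg0 h0 hMA hΩ h0Ω hbdd hq hq' (w := -w)
        (by rw [inner_neg_right]; linarith)
        (lt_min hθ₀ (by norm_num)) (min_le_right _ _) (by rwa [symSum_neg])
        (by rwa [smul_neg, symSum_neg])
  have ha0 : a ≠ 0 := by
    rintro rfl
    have := hta 6145 (by rw [smul_zero, hs0]; norm_num)
    norm_num at this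
  have hsc := hg.symSum.continuous_R2
  set T : Set R2 := {y | symSum g y ≤ 2} with hT
  have hTclosed : IsClosed T := isClosed_le hsc continuous_const
  have hTc : IsCompact T := Metric.isCompact_of_isClosed_isBounded hTclosed
    (isBounded_iff_forall_norm_le.2 ⟨_, hbdd⟩)
  have hTconv : Convex ℝ T := by simpa using hg.symSum.convex_le 2
  obtain ⟨b, hbT, hb⟩ := hTc.exists_isMaxOn (f := fun y => |det2 a y|) ⟨a, hGa⟩
    (by unfold det2; fun_prop)
  have hbmax : ∀ y ∈ T, |det2 a y| ≤ |det2 a b| := fun y hy => hb hy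
  have hdet : det2 a b ≠ 0 := by
    set y : R2 := !₂[-a 1, a 0] with hy
    set ε := 1 / (1 + symSum g y) with hε
    have hGy : 0 ≤ symSum g y := add_nonneg (hg0 _) (hg0 _)
    have hε0 : 0 < ε := by positivity
    have hyT : ε • y ∈ T := by
      have := hg.symSum.smul_le hs0 hε0.le (by rw [hε, div_le_one (by positivity)]; linarith) y
      have h2 : ε * symSum g y ≤ 1 := by
        rw [hε, one_div, inv_mul_le_one₀ (by positivity)]; linarith
      exact this.trans (by linarith)
    have h1 := hbmax _ hyT
    have h2 : det2 a (ε • y) = ε * (a 0 ^ 2 + a 1 ^ 2) := by simp [det2, hy]; ring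
    have h3 : 0 < a 0 ^ 2 + a 1 ^ 2 := by
      by_contra! hcon
      apply ha0
      ext i; fin_cases i
      · simp; nlinarith [sq_nonneg (a 0), sq_nonneg (a 1)]
      · simp; nlinarith [sq_nonneg (a 0), sq_nonneg (a 1)]
    intro h4
    rw [h4, abs_zero, h2, abs_of_pos (by positivity)] at h1
    have : 0 < ε * (a 0 ^ 2 + a 1 ^ 2) := by positivity
    linarith
  have hsplit : ∀ y : R2, symSum g y ≤ 2 → g y ≤ 2 ∧ g (-y) ≤ 2 := fun y hy => by
    have h3 : g y + g (-y) ≤ 2 := hy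
    exact ⟨by linarith [hg0 (-y)], by linarith [hg0 y]⟩
  have ev1 : lin2 a b !₂[1, 0] = a := by rw [lin2_apply]; simp
  have ev1' : lin2 a b !₂[-1, 0] = -a := by rw [lin2_apply]; simp
  have ev2 : lin2 a b !₂[0, 1] = b := by rw [lin2_apply]; simp
  have ev2' : lin2 a b !₂[0, -1] = -b := by rw [lin2_apply]; simp
  have hMA' := hMA.affine_change hκ 0 a b 0 one_pos 0 hdet
  have hg' := hg.affine_change 0 a b 0 zero_le_one 0
  have efun : (fun x => 1 * g (0 + lin2 a b x) - ⟪(0 : R2), x⟫ - 0) = fun x => g (lin2 a b x) := by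
    funext x; simp
  rw [efun] at hMA' hg'
  refine hN (fun x => g (lin2 a b x)) _ _ (lin2 !₂[a 0, b 0] !₂[a 1, b 1] q) hg'
    (fun x => hg0 _) (by simpa using h0) ?_ ?_ ?_ ?_ ?_ ?_ hMA' ?_ ?_ ?_ ?_ ?_
  · simpa only [ev1] using (hsplit a hGa).1
  · simpa only [ev1'] using (hsplit a hGa).2
  · simpa only [ev2] using (hsplit b hbT).1
  · simpa only [ev2'] using (hsplit b hbT).2
  · simpa only [ev1] using hga.trans (min_le_left _ _)
  · positivity
  · exact hΩc.preimage (continuous_const.add (continuous_lin2 a b))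
  · simp only [zero_add]
    exact hΩ.linear_preimage (lin2 a b)
  · simpa using h0Ω
  · simpa only [mem_preimage, zero_add, ev1] using haΩ
  · intro x hx
    rw [← inner_lin2]
    apply hq
    by_contra! hcon
    apply hx
    have hyT : (1 / 8 : ℝ) • lin2 a b x ∈ T := hcon
    have hd := hbmax _ hyT
    have ed : det2 a ((1 / 8 : ℝ) • lin2 a b x) = x 1 / 8 * det2 a b := by
      rw [lin2_apply]; simp [det2]; ring
    rw [ed, abs_mul] at hd
    have hx1 : |x 1 / 8| ≤ 1 := by
      have hpos : 0 < |det2 a b| := abs_pos.2 hdet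
      by_contra! hc
      nlinarith
    have hbT' : (-(x 1 / 8)) • b ∈ T := by
      rcases le_total 0 (x 1 / 8) with h | h
      · rw [abs_of_nonneg h] at hx1
        have := hg.symSum.smul_le hs0 h hx1 b
        have h2 : symSum g b ≤ 2 := hbT
        have h3 : symSum g ((x 1 / 8) • b) ≤ 2 := by nlinarith
        show symSum g _ ≤ 2
        rwa [neg_smul, symSum_neg]
      · rw [abs_of_nonpos h] at hx1
        have := hg.symSum.smul_le hs0 (by linarith) hx1 b
        have h2 : symSum g b ≤ 2 := hbT
        show symSum g _ ≤ 2
        nlinarith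
    have hmid := hTconv hyT hbT' (by norm_num : (0 : ℝ) ≤ 1 / 2) (by norm_num : (0 : ℝ) ≤ 1 / 2)
      (by norm_num)
    have emid : (1 / 2 : ℝ) • ((1 / 8 : ℝ) • lin2 a b x) + (1 / 2 : ℝ) • ((-(x 1 / 8)) • b) =
        (x 0 / 16) • a := by
      rw [lin2_apply]
      ext i
      simp
      ring
    rw [emid] at hmid
    have hx0 := abs_le.1 (hta _ hmid)
    have hx1' := abs_le.1 hx1
    exact ⟨⟨by linarith, by linarith⟩, by linarith, by linarith⟩

/-- The second difference of `f` at `m`. -/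
def secDiff (f : R2 → ℝ) (m w : R2) : ℝ := f (m + w) + f (m - w) - 2 * f m

lemma secDiff_decay : ∃ θ : ℝ, 0 < θ ∧ θ ≤ 1 / 4 ∧ ∀ (f : R2 → ℝ) (Ω : Set R2) (m w : R2)
    (h R : ℝ), ConvexOn ℝ univ f → Convex ℝ Ω → AlexandrovSol f Ω → m ∈ closure Ω → 0 < h →
    (∀ y, secDiff f m y ≤ 2 * h → ‖y‖ ≤ R) → secDiff f m w ≤ 2 * (θ * h) →
    secDiff f m ((2 : ℝ) • w) ≤ 2 * h := by
  obtain ⟨θ, hθ0, hθ1, H⟩ := symSum_decay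
  refine ⟨θ, hθ0, hθ1, fun f Ω m w h R hf hΩ hA hm hh hbdd hw => ?_⟩
  obtain ⟨p, hp⟩ := hf.exists_subgradAt m
  have hid : ∀ x : R2, lin2 !₂[1, 0] !₂[0, 1] x = x := by
    intro x; rw [lin2_apply]; ext i; fin_cases i <;> simp
  have hdet : det2 !₂[1, 0] !₂[0, 1] ≠ 0 := by simp [det2]
  have hh' : 0 < h⁻¹ := inv_pos.2 hh
  set g : R2 → ℝ := fun x => h⁻¹ * f (m + lin2 !₂[1, 0] !₂[0, 1] x) - ⟪h⁻¹ • p, x⟫ - h⁻¹ * f m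
    with hg
  have hsym : ∀ y, symSum g y = h⁻¹ * secDiff f m y := by
    intro y
    simp only [symSum, hg, hid, secDiff, inner_neg_right, ← sub_eq_add_neg]
    ring
  have hmul : ∀ y c, symSum g y ≤ c ↔ secDiff f m y ≤ c * h := by
    intro y c
    rw [hsym, inv_mul_le_iff₀ hh, mul_comm]
  rw [← hmul]
  refine H g _ _ R w (hf.affine_change m _ _ _ hh'.le _) (fun x => ?_) ?_ ?_
    ((hA.hasMongeAmpere hΩ).affine_change zero_le_one m _ _ _ hh' _ hdet) ?_ ?_ ?_ ?_ ?_
  · have h1 := mul_le_mul_of_nonneg_left (hp (m + x)) hh'.le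
    simp only [hg, hid, real_inner_smul_left]
    rw [add_sub_cancel_left] at h1
    linarith
  · simp [hg]
  · positivity
  · exact isClosed_closure.preimage (continuous_const.add (continuous_lin2 _ _))
  · intro x hx y hy a b ha hb hab
    have := hΩ.closure hx hy ha hb hab
    simp only [mem_preimage, hid] at this ⊢
    convert this using 1
    rw [smul_add, smul_add, add_add_add_comm, ← add_smul, hab, one_smul]
  · simpa using hm
  · intro y hy
    exact hbdd y ((hmul y 2).1 hy)
  · rw [hmul]; linarith

/-- A quantitative universal strict convexity estimate for Alexandrov solutions at points of the
closed domain. -/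
lemma secDiff_lower : ∃ θ β : ℝ, 0 < θ ∧ 2 ≤ β ∧ ∀ (f : R2 → ℝ) (Ω : Set R2) (m : R2)
    (R : ℝ), ConvexOn ℝ univ f → Convex ℝ Ω → AlexandrovSol f Ω → m ∈ closure Ω → 0 < R →
    (∀ y, secDiff f m y ≤ 2 → ‖y‖ ≤ R) → ∀ w, w ≠ 0 → ‖w‖ ≤ R →
    2 * θ * (‖w‖ / R) ^ β ≤ secDiff f m w := by
  obtain ⟨θ, hθ0, hθ1, H⟩ := secDiff_decay
  have hlog2 : 0 < Real.log 2 := Real.log_pos (by norm_num)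
  set β := -Real.log θ / Real.log 2 with hβ
  have hβ2 : 2 ≤ β := by
    rw [hβ, le_div_iff₀ hlog2]
    have h1 : Real.log θ ≤ Real.log (1 / 4) := Real.log_le_log hθ0 hθ1
    have h2 : Real.log (1 / 4) = -(2 * Real.log 2) := by
      rw [one_div, Real.log_inv]
      have : (4 : ℝ) = 2 ^ 2 := by norm_num
      rw [this, Real.log_pow]
      push_cast
      ring
    linarith
  have hθβ : θ = (1 / 2 : ℝ) ^ β := by
    rw [Real.rpow_def_of_pos (by norm_num), one_div, Real.log_inv, hβ]
    have : -Real.log 2 * (-Real.log θ / Real.log 2) = Real.log θ := by field_simp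
    rw [this, Real.exp_log hθ0]
  refine ⟨θ, β, hθ0, hβ2, fun f Ω m R hf hΩ hA hm hR hbdd w hw hwR => ?_⟩
  have iter : ∀ k : ℕ, ∀ y, secDiff f m y ≤ 2 * θ ^ k → ‖y‖ ≤ R * (1 / 2) ^ k := by
    intro k
    induction k with
    | zero => intro y hy; simpa using hbdd y (by simpa using hy)
    | succ k ih =>
      intro y hy
      have h1 := H f Ω m y (θ ^ k) _ hf hΩ hA hm (by positivity) ih (by rwa [← pow_succ'])
      have h2 := ih _ h1
      rw [norm_smul] at h2
      norm_num at h2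
      rw [pow_succ]
      norm_num
      linarith
  have hx0 : 0 < ‖w‖ / R := div_pos (norm_pos_iff.2 hw) hR
  have hx1 : ‖w‖ / R ≤ 1 := (div_le_one hR).2 hwR
  obtain ⟨n, hn1, hn2⟩ := exists_nat_pow_near_of_lt_one hx0 hx1 (by norm_num : (0 : ℝ) < 1 / 2)
    (by norm_num)
  have h1 : 2 * θ ^ (n + 1) ≤ secDiff f m w := by
    by_contra! hcon
    have := iter (n + 1) w hcon.le
    rw [lt_div_iff₀ hR] at hn1
    linarith
  have h2 : (‖w‖ / R) ^ β ≤ θ ^ n := by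
    calc (‖w‖ / R) ^ β ≤ ((1 / 2 : ℝ) ^ n) ^ β :=
          Real.rpow_le_rpow hx0.le hn2 (by linarith)
      _ = θ ^ n := by
        rw [hθβ, ← Real.rpow_natCast, ← Real.rpow_natCast, ← Real.rpow_mul (by norm_num),
          ← Real.rpow_mul (by norm_num), mul_comm]
  calc 2 * θ * (‖w‖ / R) ^ β ≤ 2 * θ * θ ^ n := by gcongr
    _ = 2 * θ ^ (n + 1) := by rw [pow_succ]; ring
    _ ≤ _ := h1

lemma SubgradAt.eq_gradient {f : R2 → ℝ} {x p : R2} (hp : SubgradAt f x p)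
    (hd : DifferentiableAt ℝ f x) : p = gradient f x := by
  have h1 : HasFDerivAt (fun y => f y - ⟪p, y⟫) (fderiv ℝ f x - innerSL ℝ p) x :=
    hd.hasFDerivAt.sub (innerSL ℝ p).hasFDerivAt
  have hmin : IsLocalMin (fun y => f y - ⟪p, y⟫) x := by
    refine Filter.Eventually.of_forall fun y => ?_
    have := hp y
    rw [inner_sub_right] at this
    linarith
  have h2 := hmin.hasFDerivAt_eq_zero h1
  have h3 : fderiv ℝ f x = InnerProductSpace.toDual ℝ R2 p := by
    ext y
    have := congrArg (fun φ => φ y) h2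
    simp at this
    simp only [InnerProductSpace.toDual_apply_apply]
    linarith
  rw [gradient, h3]
  simp

lemma ConvexOn.subgradAt_gradient {f : R2 → ℝ} (hf : ConvexOn ℝ univ f) {x : R2}
    (hd : DifferentiableAt ℝ f x) : SubgradAt f x (gradient f x) := by
  obtain ⟨p, hp⟩ := hf.exists_subgradAt x
  rwa [← hp.eq_gradient hd]

lemma ConvexOn.volume_not_differentiableAt {f : R2 → ℝ} (hf : ConvexOn ℝ univ f) :
    volume {x | ¬ DifferentiableAt ℝ f x} = 0 := by
  refine measure_null_of_locally_null _ fun x _ => ?_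
  obtain ⟨K, t, ht, hK⟩ := hf.locallyLipschitz x
  refine ⟨{x | ¬ DifferentiableAt ℝ f x} ∩ interior t,
    Filter.inter_mem self_mem_nhdsWithin (mem_nhdsWithin_of_mem_nhds (interior_mem_nhds.2 ht)),
    ?_⟩
  have h := hK.ae_differentiableWithinAt_of_mem (μ := volume)
  refine measure_mono_null ?_ (ae_iff.1 h)
  intro y hy hy'
  exact hy.1 ((hy' (interior_subset hy.2)).differentiableAt (mem_interior_iff_mem_nhds.1 hy.2))

/-- Almost all slopes are gradients at interior points of the support of the Monge-Ampère
measure. -/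
lemma AlexandrovSol.volume_subdiffImage_diff {f : R2 → ℝ} {Ω Ω' : Set R2}
    (hA : AlexandrovSol f Ω) (hf : ConvexOn ℝ univ f) (hΩ : Convex ℝ Ω)
    (hg : ∀ x ∈ Ω, gradient f x ∈ Ω') : volume (subdiffImage f univ \ Ω') = 0 := by
  have hm : MeasurableSet ({x | ¬ DifferentiableAt ℝ f x} ∪ (interior Ω)ᶜ) :=
    (measurableSet_of_differentiableAt ℝ f).compl.union isOpen_interior.measurableSet.compl
  have h0 : volume (({x | ¬ DifferentiableAt ℝ f x} ∪ (interior Ω)ᶜ) ∩ Ω) = 0 := by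
    refine measure_mono_null (t := {x | ¬ DifferentiableAt ℝ f x} ∪ frontier Ω) ?_
      (measure_union_null hf.volume_not_differentiableAt (hΩ.addHaar_frontier volume))
    rintro x ⟨hx | hx, hxΩ⟩
    · exact Or.inl hx
    · exact Or.inr ⟨subset_closure hxΩ, hx⟩
  refine measure_mono_null ?_ ((hA _ hm).trans h0)
  rintro p ⟨hp, hp'⟩
  obtain ⟨x, -, hx⟩ := mem_subdiffImage.1 hp
  refine mem_subdiffImage.2 ⟨x, ?_, hx⟩
  by_contra h
  rw [mem_union, not_or] at h
  have hd : DifferentiableAt ℝ f x := not_not.1 h.1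
  have hi : x ∈ Ω := interior_subset (not_not.1 h.2)
  exact hp' (hx.eq_gradient hd ▸ hg x hi)

lemma ConvexOn.exists_subgradAt_of_coercive {f : R2 → ℝ} (hf : ConvexOn ℝ univ f) {q : R2}
    {ε C : ℝ} (hε : 0 < ε) (h : ∀ z, ⟪q, z⟫ + ε * ‖z‖ - C ≤ f z) : ∃ x, SubgradAt f x q := by
  have hc : Continuous fun z => f z - ⟪q, z⟫ := by
    have := hf.continuous_R2
    fun_prop
  have ht : Filter.Tendsto (fun z => f z - ⟪q, z⟫) (Filter.cocompact R2) Filter.atTop := by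
    have h1 : Filter.Tendsto (fun z : R2 => ε * ‖z‖ + -C) (Filter.cocompact R2) Filter.atTop :=
      Filter.tendsto_atTop_add_const_right _ _
        ((tendsto_norm_cocompact_atTop).const_mul_atTop hε)
    refine Filter.tendsto_atTop_mono (fun z => ?_) h1
    linarith [h z]
  obtain ⟨x, hx⟩ := hc.exists_forall_le ht
  refine ⟨x, fun y => ?_⟩
  have := hx y
  rw [inner_sub_right]
  linarith

lemma R2.norm_le_abs_add_abs (z : R2) : ‖z‖ ≤ |z 0| + |z 1| := by
  rw [EuclideanSpace.norm_eq]
  apply Real.sqrt_le_iff.2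
  refine ⟨by positivity, ?_⟩
  simp only [Fin.sum_univ_two, Real.norm_eq_abs]
  nlinarith [abs_nonneg (z 0), abs_nonneg (z 1)]

/-- If all slopes near `y₀` are attained, then `f - y₀` grows linearly. -/
lemma exists_linear_growth {f : R2 → ℝ} {y₀ : R2} {ρ : ℝ} (hρ : 0 < ρ)
    (h : ∀ y ∈ ball y₀ ρ, ∃ x, SubgradAt f x y) :
    ∃ ε C : ℝ, 0 < ε ∧ ∀ z, ⟪y₀, z⟫ + ε * ‖z‖ - C ≤ f z := by
  have key : ∀ s t : ℝ, |s| + |t| < ρ → ∃ C, ∀ z, ⟪y₀, z⟫ + (s * z 0 + t * z 1) - C ≤ f z := by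
    intro s t hst
    have hn : ‖(!₂[s, t] : R2)‖ < ρ :=
      (R2.norm_le_abs_add_abs _).trans_lt (by simpa using hst)
    obtain ⟨x, hx⟩ := h (y₀ + !₂[s, t]) (by simpa [mem_ball, dist_eq_norm] using hn)
    refine ⟨⟪y₀ + !₂[s, t], x⟫ - f x, fun z => ?_⟩
    have := hx z
    rw [inner_sub_right, inner_add_left y₀ _ z, R2.inner_eq !₂[s, t] z] at this
    simp at this
    simp only [inner_add_left] at *
    linarith
  have hr : |ρ / 2| = ρ / 2 := abs_of_pos (by positivity)
  obtain ⟨C1, h1⟩ := key (ρ / 2) 0 (by simp [hr]; linarith)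
  obtain ⟨C2, h2⟩ := key (-(ρ / 2)) 0 (by simp [hr]; linarith)
  obtain ⟨C3, h3⟩ := key 0 (ρ / 2) (by simp [hr]; linarith)
  obtain ⟨C4, h4⟩ := key 0 (-(ρ / 2)) (by simp [hr]; linarith)
  refine ⟨ρ / 4, |C1| + |C2| + |C3| + |C4|, by positivity, fun z => ?_⟩
  have hz := mul_le_mul_of_nonneg_left (R2.norm_le_abs_add_abs z) (by positivity : 0 ≤ ρ / 4)
  have e1 := h1 z
  have e2 := h2 z
  have e3 := h3 z
  have e4 := h4 z
  have a1 := le_abs_self C1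
  have a2 := le_abs_self C2
  have a3 := le_abs_self C3
  have a4 := le_abs_self C4
  have b1 := abs_nonneg C1
  have b2 := abs_nonneg C2
  have b3 := abs_nonneg C3
  have b4 := abs_nonneg C4
  rcases abs_cases (z 0) with ⟨h0, -⟩ | ⟨h0, -⟩ <;>
  rcases abs_cases (z 1) with ⟨h0', -⟩ | ⟨h0', -⟩ <;> rw [h0, h0'] at hz <;> linarith

/-- All subgradients lie in the closure of the target. -/
lemma AlexandrovSol.subgrad_mem_closure {f : R2 → ℝ} {Ω Ω' : Set R2}
    (hA : AlexandrovSol f Ω) (hf : ConvexOn ℝ univ f) (hΩ : Convex ℝ Ω)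
    (hg : ∀ x ∈ Ω, gradient f x ∈ Ω') (hs : ∀ y ∈ Ω', ∃ x, SubgradAt f x y)
    (hne : (interior Ω').Nonempty) {x p : R2} (hp : SubgradAt f x p) : p ∈ closure Ω' := by
  by_contra hpc
  obtain ⟨y₀, hy₀⟩ := hne
  obtain ⟨ρ, hρ, hball⟩ := Metric.isOpen_iff.1 isOpen_interior y₀ hy₀
  obtain ⟨ε, C, hε, hgrow⟩ := exists_linear_growth hρ
    fun y hy => hs y (interior_subset (hball hy))
  have htend : Filter.Tendsto (fun t : ℝ => (1 - t) • p + t • y₀) (nhdsWithin 0 (Ioi 0))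
      (nhds p) := by
    have : Continuous fun t : ℝ => (1 - t) • p + t • y₀ := by fun_prop
    have h := this.tendsto 0
    simp only [sub_zero, one_smul, zero_smul, add_zero] at h
    exact h.mono_left nhdsWithin_le_nhds
  obtain ⟨t, ht, ht0, ht1⟩ := ((htend.eventually
    (isClosed_closure.isOpen_compl.mem_nhds hpc)).and (Ioo_mem_nhdsGT one_pos)).exists
  set q := (1 - t) • p + t • y₀ with hq
  have hopen : IsOpen (ball q (t * ε) ∩ (closure Ω')ᶜ) :=
    isOpen_ball.inter isClosed_closure.isOpen_compl
  have hpos : 0 < volume (ball q (t * ε) ∩ (closure Ω')ᶜ) :=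
    hopen.measure_pos _ ⟨q, mem_ball_self (by positivity), ht⟩
  refine hpos.ne' (measure_mono_null ?_ (hA.volume_subdiffImage_diff hf hΩ hg))
  rintro y ⟨hy, hy'⟩
  refine ⟨mem_subdiffImage.2 ?_, fun h => hy' (subset_closure h)⟩
  have hyn : ‖y - q‖ < t * ε := by rwa [mem_ball, dist_eq_norm] at hy
  obtain ⟨z, hz⟩ := hf.exists_subgradAt_of_coercive (q := y) (ε := t * ε - ‖y - q‖)
    (C := t * C + (1 - t) * (⟪p, x⟫ - f x)) (by linarith) (fun z => by
      have e1 := mul_le_mul_of_nonneg_left (hgrow z) ht0.le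
      have e2 := mul_le_mul_of_nonneg_left (hp z) (by linarith : 0 ≤ 1 - t)
      have e3 := real_inner_le_norm (y - q) z
      have e4 : ⟪y, z⟫ = ⟪y - q, z⟫ + (1 - t) * ⟪p, z⟫ + t * ⟪y₀, z⟫ := by
        rw [inner_sub_left, hq, inner_add_left, real_inner_smul_left, real_inner_smul_left]
        ring
      rw [inner_sub_right] at e2
      rw [e4]
      nlinarith)
  exact ⟨z, mem_univ _, hz⟩

/-- The symmetric duality relations between the two potentials of the family. -/
structure IsDualPair (u v : R2 → ℝ) (Ω₁ Ω₂ : Set R2) : Prop where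
  convex_left : ConvexOn ℝ univ u
  convex_right : ConvexOn ℝ univ v
  convex_source : Convex ℝ Ω₁
  convex_target : Convex ℝ Ω₂
  alexandrov_left : AlexandrovSol u Ω₁
  alexandrov_right : AlexandrovSol v Ω₂
  left_zero : u 0 = 0
  right_zero : v 0 = 0
  left_nonneg : ∀ x, 0 ≤ u x
  right_nonneg : ∀ x, 0 ≤ v x
  mem_target : ∀ x p, SubgradAt u x p → p ∈ closure Ω₂
  mem_source : ∀ p x, SubgradAt v p x → x ∈ closure Ω₁
  young_target : ∀ p ∈ closure Ω₂, ∀ x, ⟪x, p⟫ ≤ u x + v p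
  young_source : ∀ x ∈ closure Ω₁, ∀ p, ⟪p, x⟫ ≤ v p + u x
  eq_left : ∀ x p, SubgradAt u x p → v p = ⟪x, p⟫ - u x
  eq_right : ∀ p x, SubgradAt v p x → u x = ⟪p, x⟫ - v p

lemma IsDualPair.symm {u v : R2 → ℝ} {Ω₁ Ω₂ : Set R2} (h : IsDualPair u v Ω₁ Ω₂) :
    IsDualPair v u Ω₂ Ω₁ :=
  ⟨h.2, h.1, h.4, h.3, h.6, h.5, h.8, h.7, h.10, h.9, h.12, h.11, h.14, h.13, h.16, h.15⟩

lemma InSFamily.isDualPair {δb : ℝ} {u v : R2 → ℝ} {Ω₁ Ω₂ : Set R2} {L l : ℝ → ℝ}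
    {e f : ℝ → R2} (H : InSFamily δb u v Ω₁ Ω₂ L l e f) : IsDualPair u v Ω₁ Ω₂ := by
  obtain ⟨hu, hv, hΩ₁, hΩ₂, hi₁, hi₂, -, -, hgu, hgv, hAu, hu0, hsu, hAv, hv0, hsv, hleg, -⟩ := H
  have upos : ∀ x, 0 ≤ u x := fun x => by simpa [hu0] using hsu x
  have vpos : ∀ x, 0 ≤ v x := fun x => by simpa [hv0] using hsv x
  have attained : ∀ {w : R2 → ℝ} {A B : Set R2}, ConvexOn ℝ univ w → SubgradAt w 0 0 →
      (fun x => gradient w x) '' A = B → ∀ y ∈ B, ∃ x, (x ∈ A ∨ y = 0) ∧ SubgradAt w x y := by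
    intro w A B hw h0 hAB y hy
    rw [← hAB] at hy
    obtain ⟨x, hxA, rfl⟩ := hy
    by_cases hd : DifferentiableAt ℝ w x
    · exact ⟨x, Or.inl hxA, hw.subgradAt_gradient hd⟩
    · refine ⟨0, Or.inr (gradient_eq_zero_of_not_differentiableAt hd), ?_⟩
      simpa [gradient_eq_zero_of_not_differentiableAt hd] using h0
  have attu := attained hu hsu hgu
  have attv := attained hv hsv hgv
  have memu : ∀ x p, SubgradAt u x p → p ∈ closure Ω₂ := fun x p hp =>
    hAu.subgrad_mem_closure hu hΩ₁ (fun x hx => hgu ▸ mem_image_of_mem _ hx)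
      (fun y hy => (attu y hy).imp fun _ h => h.2) hi₂ hp
  have memv : ∀ x p, SubgradAt v x p → p ∈ closure Ω₁ := fun x p hp =>
    hAv.subgrad_mem_closure hv hΩ₂ (fun x hx => hgv ▸ mem_image_of_mem _ hx)
      (fun y hy => (attv y hy).imp fun _ h => h.2) hi₁ hp
  have young : ∀ p ∈ closure Ω₂, ∀ x, ⟪x, p⟫ ≤ u x + v p := by
    have hcl : IsClosed {p : R2 | ∀ x, ⟪x, p⟫ ≤ u x + v p} := by
      simp only [ofPred_forall]
      refine isClosed_iInter fun x => isClosed_le (by fun_prop) ?_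
      have := hv.continuous_R2
      fun_prop
    refine closure_minimal (fun y hy x => ?_) hcl
    obtain ⟨x₁, -, hx₁⟩ := attu y hy
    have hb : BddAbove (range fun x : R2 => ⟪x, y⟫ - u x) := by
      refine ⟨⟪x₁, y⟫ - u x₁, ?_⟩
      rintro _ ⟨z, rfl⟩
      have := hx₁ z
      rw [inner_sub_right, real_inner_comm z, real_inner_comm x₁] at this
      simp only
      linarith
    have := le_ciSup hb x
    rw [← hleg y hy] at this
    linarith
  have equ : ∀ x p, SubgradAt u x p → v p = ⟪x, p⟫ - u x := by
    intro x p hp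
    refine le_antisymm ?_ (by linarith [young p (memu x p hp) x])
    obtain ⟨y₀, hy₀⟩ := hi₂
    have hpc := memu x p hp
    have hc : Continuous fun t : ℝ => v ((1 - t) • p + t • y₀) -
        ((1 - t) * (⟪x, p⟫ - u x) + t * v y₀) := by
      have := hv.continuous_R2
      fun_prop
    have htend := (hc.tendsto 0).mono_left (nhdsWithin_le_nhds (s := Ioi 0))
    have := le_of_tendsto htend (b := 0) (by
      filter_upwards [Ioo_mem_nhdsGT one_pos] with t ht
      have hmem : (1 - t) • p + t • y₀ ∈ Ω₂ := interior_subset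
        (hΩ₂.combo_closure_interior_mem_interior hpc hy₀ (by linarith [ht.2]) ht.1 (by ring))
      rw [hleg _ hmem, sub_nonpos]
      refine ciSup_le fun z => ?_
      have e1 := mul_le_mul_of_nonneg_left (hp z) (by linarith [ht.2] : 0 ≤ 1 - t)
      have e2 := mul_le_mul_of_nonneg_left
        (young y₀ (subset_closure (interior_subset hy₀)) z) ht.1.le
      rw [inner_sub_right, real_inner_comm z, real_inner_comm x] at e1
      rw [inner_add_right, inner_smul_right, inner_smul_right]
      linarith)
    simp at this
    linarith
  have young' : ∀ x ∈ closure Ω₁, ∀ p, ⟪p, x⟫ ≤ v p + u x := by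
    have hcl : IsClosed {x : R2 | ∀ p, ⟪p, x⟫ ≤ v p + u x} := by
      simp only [ofPred_forall]
      refine isClosed_iInter fun x => isClosed_le (by fun_prop) ?_
      have := hu.continuous_R2
      fun_prop
    refine closure_minimal (fun x hx p => ?_) hcl
    obtain ⟨p', hp', hxp⟩ := attv x hx
    rcases hp' with hp' | rfl
    · have h1 := hxp p
      have h2 := young p' (subset_closure hp') x
      rw [inner_sub_right, real_inner_comm p x] at h1
      linarith
    · simp [hu0, vpos]
  refine ⟨hu, hv, hΩ₁, hΩ₂, hAu, hAv, hu0, hv0, upos, vpos, memu, memv, young, young', equ, ?_⟩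
  intro p x hx
  refine le_antisymm ?_ (by linarith [young' x (memv p x hx) p])
  obtain ⟨y, hy⟩ := hu.exists_subgradAt x
  have h1 := equ x y hy
  have h2 := hx y
  rw [inner_sub_right, real_inner_comm p x] at h2
  linarith

/-- `w` grows linearly with rate `ε` relative to some slope bounded by `C`. -/
def HasLinearGrowth (ε C : ℝ) (w : R2 → ℝ) : Prop :=
  ∃ p : R2, ‖p‖ ≤ C ∧ ∀ x, ⟪p, x⟫ + ε * ‖x‖ - C ≤ w x

lemma R2.norm_sq_eq_of_orthonormal {e f : R2} (he : ‖e‖ = 1) (hf : ‖f‖ = 1) (hef : ⟪e, f⟫ = 0)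
    (x : R2) : ⟪x, e⟫ ^ 2 + ⟪x, f⟫ ^ 2 = ‖x‖ ^ 2 := by
  have he' := real_inner_self_eq_norm_sq e
  have hf' := real_inner_self_eq_norm_sq f
  rw [he, R2.inner_eq] at he'
  rw [hf, R2.inner_eq] at hf'
  rw [R2.inner_eq] at hef
  rw [← real_inner_self_eq_norm_sq, R2.inner_eq, R2.inner_eq, R2.inner_eq]
  set d := e 0 * f 1 - e 1 * f 0 with hd
  have h1 : f 1 = d * e 0 := by rw [hd]; linear_combination (-f 1) * he' + e 1 * hef
  have h0 : f 0 = -(d * e 1) := by rw [hd]; linear_combination (-f 0) * he' + e 0 * hef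
  have hd2 : d ^ 2 = 1 := by
    rw [h0, h1] at hf'
    linear_combination hf' - d ^ 2 * he'
  rw [h0, h1]
  linear_combination (x 0 ^ 2 + x 1 ^ 2) * he' + (x 1 * e 0 - x 0 * e 1) ^ 2 * hd2

lemma ellipse_one_eq {e f : R2} (he : ‖e‖ = 1) (hf : ‖f‖ = 1) (hef : ⟪e, f⟫ = 0) :
    ellipse e f 1 1 = closedBall 0 1 := by
  ext x
  simp only [ellipse, mem_ofPred_eq, div_one, mem_closedBall_zero_iff,
    R2.norm_sq_eq_of_orthonormal he hf hef]
  exact sq_le_one_iff₀ (norm_nonneg x)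

/-- The slope of a centred section which is comparable to the unit disk is bounded. -/
lemma exists_slope_bound {δ : ℝ} (hδ : 0 < δ) : ∃ P : ℝ, 0 < P ∧ ∀ (w : R2 → ℝ) (p z : R2),
    Continuous w → (∀ x, 0 ≤ w x) → (∫ x in {x | w x < ⟪p, x⟫ + 1}, x) = 0 →
    {x | w x < ⟪p, x⟫ + 1} ⊆ closedBall 0 δ⁻¹ →
    closedBall z δ ⊆ {x | w x < ⟪p, x⟫ + 1} → ‖p‖ ≤ P := by
  set A := volume.real (closedBall (0 : R2) δ⁻¹) with hA
  set B := volume.real (ball (0 : R2) (δ / 2)) with hB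
  have hApos : 0 < A := ENNReal.toReal_pos (measure_closedBall_pos _ _ (by positivity)).ne'
    measure_closedBall_lt_top.ne
  have hBpos : 0 < B := ENNReal.toReal_pos (measure_ball_pos _ _ (by positivity)).ne'
    measure_ball_lt_top.ne
  refine ⟨A / (δ / 2 * B), by positivity, fun w p z hw hw0 hint hS hz => ?_⟩
  set S := {x | w x < ⟪p, x⟫ + 1} with hSdef
  have hSm : MeasurableSet S := (isOpen_lt hw (by fun_prop)).measurableSet
  have hSfin : volume S ≠ ⊤ := (measure_mono hS).trans_lt measure_closedBall_lt_top |>.ne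
  have hid : IntegrableOn (fun x : R2 => x) S :=
    (continuous_id.continuousOn.integrableOn_compact (isCompact_closedBall 0 δ⁻¹)).mono_set hS
  have hinner : IntegrableOn (fun x : R2 => ⟪p, x⟫) S := hid.const_inner p
  have hI : ∫ x in S, (⟪p, x⟫ + 1) = volume.real S := by
    rw [integral_add hinner (integrableOn_const hSfin), integral_inner hid, hint]
    simp
  rcases eq_or_ne p 0 with rfl | hp
  · rw [norm_zero]; positivity
  have hpn : 0 < ‖p‖ := norm_pos_iff.2 hp
  have hcen : δ * ‖p‖ ≤ ⟪p, z⟫ + 1 := by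
    have hmem : z - (δ / ‖p‖) • p ∈ S := hz (by
      rw [mem_closedBall, dist_eq_norm, sub_sub_cancel_left, norm_neg, norm_smul, norm_div,
        norm_norm, Real.norm_eq_abs, abs_of_pos hδ]
      field_simp; rfl)
    have h1 : w (z - (δ / ‖p‖) • p) < ⟪p, z - (δ / ‖p‖) • p⟫ + 1 := hmem
    have h2 := hw0 (z - (δ / ‖p‖) • p)
    rw [inner_sub_right, inner_smul_right, real_inner_self_eq_norm_sq] at h1
    have : δ / ‖p‖ * ‖p‖ ^ 2 = δ * ‖p‖ := by field_simp
    linarith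
  have hsub : ball z (δ / 2) ⊆ S :=
    (ball_subset_closedBall.trans (closedBall_subset_closedBall (by linarith))).trans hz
  have hlow : δ / 2 * ‖p‖ * B ≤ volume.real S := by
    rw [← hI]
    have h1 : ∫ x in ball z (δ / 2), (⟪p, x⟫ + 1) ≤ ∫ x in S, (⟪p, x⟫ + 1) := by
      refine setIntegral_mono_set (hinner.add (integrableOn_const hSfin)) ?_
        (Filter.Eventually.of_forall hsub)
      filter_upwards [ae_restrict_mem hSm] with x hx
      exact (hw0 x).trans (le_of_lt hx)
    have h2 : ∫ x in ball z (δ / 2), (δ / 2 * ‖p‖) ≤ ∫ x in ball z (δ / 2), (⟪p, x⟫ + 1) := by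
      refine setIntegral_mono_on (integrableOn_const measure_ball_lt_top.ne)
        ((hinner.add (integrableOn_const hSfin)).mono_set hsub) measurableSet_ball ?_
      intro x hx
      rw [mem_ball, dist_eq_norm] at hx
      have h3 := abs_le.1 (abs_real_inner_le_norm p (x - z))
      rw [inner_sub_right] at h3
      nlinarith [h3.1]
    have h3 : ∫ x in ball z (δ / 2), (δ / 2 * ‖p‖) = δ / 2 * ‖p‖ * B := by
      rw [setIntegral_const, smul_eq_mul, mul_comm, hB, measureReal_def, measureReal_def,
        Measure.addHaar_ball_center]
    linarith
  have hup : volume.real S ≤ A := measureReal_mono hS measure_closedBall_lt_top.ne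
  rw [le_div_iff₀ (by positivity)]
  linarith

lemma exists_linearGrowth_of_section {δ : ℝ} (hδ : 0 < δ) : ∃ ε C : ℝ, 0 < ε ∧ 0 < C ∧
    ∀ (w : R2 → ℝ) (e f z : R2) (S Ω : Set R2), ConvexOn ℝ univ w → (∀ x, 0 ≤ w x) → w 0 = 0 →
    ‖e‖ = 1 → ‖f‖ = 1 → ⟪e, f⟫ = 0 → IsCentredSection w 0 1 S →
    (fun x => z + δ • x) '' ellipse e f 1 1 ⊆ Ω ∩ S →
    S ⊆ (fun x => δ⁻¹ • x) '' ellipse e f 1 1 → HasLinearGrowth ε C w := by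
  obtain ⟨P, hP, H⟩ := exists_slope_bound hδ
  refine ⟨δ / 2, P + P * (2 / δ) + 1, by positivity, by positivity, ?_⟩
  rintro w e f z S Ω hw hw0 hw00 he hf hef ⟨p, hS, hint⟩ hin hout
  rw [ellipse_one_eq he hf hef] at hin hout
  have hS' : S = {x | w x < ⟪p, x⟫ + 1} := by simpa [hw00] using hS
  have hball : S ⊆ closedBall 0 δ⁻¹ := by
    refine hout.trans ?_
    rintro _ ⟨x, hx, rfl⟩
    rw [mem_closedBall_zero_iff] at *
    rw [norm_smul, Real.norm_eq_abs, abs_of_pos (by positivity : 0 < δ⁻¹)]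
    exact mul_le_of_le_one_right (by positivity) hx
  have hball' : closedBall z δ ⊆ S := by
    intro x hx
    refine (hin ⟨δ⁻¹ • (x - z), ?_, ?_⟩).2
    · rw [mem_closedBall, dist_eq_norm] at hx
      rw [mem_closedBall_zero_iff, norm_smul, Real.norm_eq_abs,
        abs_of_pos (by positivity : 0 < δ⁻¹), inv_mul_le_iff₀ hδ]
      linarith
    · simp [smul_smul, hδ.ne']
  have hpP : ‖p‖ ≤ P := H w p z hw.continuous_R2 hw0 (by rw [← hS']; simpa using hint)
    (hS' ▸ hball) (hS' ▸ hball')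
  refine ⟨p, hpP.trans (by nlinarith [(by positivity : 0 < P * (2 / δ))]), fun x => ?_⟩
  have hr : 0 < 2 / δ := by positivity
  rcases le_or_gt ‖x‖ (2 / δ) with hx | hx
  · have h1 := real_inner_le_norm p x
    have h2 : ‖p‖ * ‖x‖ ≤ P * (2 / δ) := mul_le_mul hpP hx (norm_nonneg _) hP.le
    have h3 : δ / 2 * ‖x‖ ≤ 1 := by
      calc δ / 2 * ‖x‖ ≤ δ / 2 * (2 / δ) := mul_le_mul_of_nonneg_left hx (by positivity)
        _ = 1 := by field_simp
    linarith [hw0 x]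
  · have hxn : 0 < ‖x‖ := hr.trans hx
    set t := 2 / δ / ‖x‖ with ht
    have ht0 : 0 < t := by positivity
    have ht1 : t ≤ 1 := by rw [ht, div_le_one hxn]; exact hx.le
    have hnS : t • x ∉ S := by
      intro h
      have := hball h
      rw [mem_closedBall_zero_iff, norm_smul, Real.norm_eq_abs, abs_of_pos ht0, ht,
        div_mul_cancel₀ _ hxn.ne', div_eq_mul_inv] at this
      nlinarith [inv_pos.2 hδ]
    rw [hS', mem_ofPred_eq, not_lt, inner_smul_right] at hnS
    have h1 := hw.smul_le hw00 ht0.le ht1 x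
    have h2 : ⟪p, x⟫ + t⁻¹ ≤ w x := by
      have : t * (⟪p, x⟫ + t⁻¹) ≤ t * w x := by
        rw [mul_add, mul_inv_cancel₀ ht0.ne']; linarith
      exact le_of_mul_le_mul_left this ht0
    have h3 : t⁻¹ = δ / 2 * ‖x‖ := by rw [ht]; field_simp
    rw [h3] at h2
    nlinarith [(by positivity : 0 < P * (2 / δ))]

lemma InSFamily.exists_linearGrowth {δb : ℝ} (hδ : 0 < δb) : ∃ ε C : ℝ, 0 < ε ∧ 0 < C ∧
    ∀ (u v : R2 → ℝ) (Ω₁ Ω₂ : Set R2) (L l : ℝ → ℝ) (e f : ℝ → R2),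
      InSFamily δb u v Ω₁ Ω₂ L l e f → HasLinearGrowth ε C u ∧ HasLinearGrowth ε C v := by
  obtain ⟨ε, C, hε, hC, H⟩ := exists_linearGrowth_of_section hδ
  refine ⟨ε, C, hε, hC, fun u v Ω₁ Ω₂ L l e f hS => ?_⟩
  have hd := hS.isDualPair
  obtain ⟨-, -, -, -, -, -, -, -, -, -, -, -, -, -, -, -, -, hL, hl, hh⟩ := hS
  obtain ⟨he, hf, hef, -, -, -, ⟨S, hS, ⟨x, hx⟩, hSe⟩, ⟨T, hT, ⟨y, hy⟩, hTe⟩⟩ :=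
    hh 1 ⟨one_pos, le_rfl⟩
  rw [hL, hl] at hx hSe hy hTe
  exact ⟨H u _ _ x S Ω₁ hd.convex_left hd.left_nonneg hd.left_zero he hf hef hS hx hSe,
    H v _ _ y T Ω₂ hd.convex_right hd.right_nonneg hd.right_zero hf he
      (by rw [real_inner_comm, hef]) hT hy hTe⟩

/-- The dual potential is bounded near the central slope. -/
lemma IsDualPair.exists_ball_le {u v : R2 → ℝ} {Ω₁ Ω₂ : Set R2} (h : IsDualPair u v Ω₁ Ω₂)
    {ε C : ℝ} {p : R2} (hp : ∀ x, ⟪p, x⟫ + ε * ‖x‖ - C ≤ u x) {y : R2} (hy : ‖y - p‖ < ε) :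
    y ∈ closure Ω₂ ∧ v y ≤ C := by
  have key : ∀ z, ⟪y, z⟫ ≤ ⟪p, z⟫ + ‖y - p‖ * ‖z‖ := fun z => by
    have := real_inner_le_norm (y - p) z
    rw [inner_sub_left] at this
    linarith
  obtain ⟨z, hz⟩ := h.convex_left.exists_subgradAt_of_coercive (q := y) (ε := ε - ‖y - p‖)
    (C := C) (by linarith) (fun z => by nlinarith [key z, hp z])
  refine ⟨h.mem_target z y hz, ?_⟩
  rw [h.eq_left z y hz, real_inner_comm]
  nlinarith [key z, hp z, norm_nonneg z]

/-- Local gradient bound. -/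
lemma exists_subgrad_bound {ε C R : ℝ} (hε : 0 < ε) (hC : 0 < C) (hR : 0 < R) :
    ∃ Y : ℝ, 0 < Y ∧ ∀ (u v : R2 → ℝ) (Ω₁ Ω₂ : Set R2), IsDualPair u v Ω₁ Ω₂ →
      HasLinearGrowth ε C u → ∀ x y, ‖x‖ ≤ R → SubgradAt u x y → ‖y‖ ≤ Y := by
  obtain ⟨θ, hθ, H⟩ := heinz (κ := (ε / (4 * R)) ^ 2) (by positivity)
  refine ⟨max (2 * C) (C / (R * θ)), lt_max_of_lt_left (by positivity), ?_⟩
  rintro u v Ω₁ Ω₂ hd ⟨p, hpC, hp⟩ x y hx hy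
  by_contra! hlt
  obtain ⟨hlt1, hlt2⟩ := max_lt_iff.1 hlt
  have hyn : 0 < ‖y‖ := by linarith
  have hyΩ := hd.mem_target x y hy
  have hvy : v y ≤ R * ‖y‖ := by
    rw [hd.eq_left x y hy]
    have := real_inner_le_norm x y
    nlinarith [hd.left_nonneg x]
  set d := y - p with hddef
  have hdn : ‖y‖ / 2 ≤ ‖d‖ := by
    have := norm_sub_norm_le y p
    linarith
  have hdpos : 0 < ‖d‖ := by linarith
  have hdsq : d 0 * d 0 + d 1 * d 1 = ‖d‖ ^ 2 := by
    rw [← R2.inner_eq, real_inner_self_eq_norm_sq]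
  set n : R2 := !₂[-d 1, d 0] with hn
  have hnn : ‖n‖ = ‖d‖ := by
    rw [← sq_eq_sq₀ (norm_nonneg _) (norm_nonneg _), ← hdsq, ← real_inner_self_eq_norm_sq,
      R2.inner_eq]
    simp [hn]; ring
  set a : R2 := (ε / 2 / ‖d‖) • n with ha
  have han : ‖a‖ = ε / 2 := by
    rw [ha, norm_smul, hnn, Real.norm_eq_abs, abs_of_pos (by positivity)]
    field_simp
  have hdet : det2 a d = -(ε / 2 * ‖d‖) := by
    have : det2 a d = -(ε / 2 / ‖d‖) * (d 0 * d 0 + d 1 * d 1) := by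
      simp [det2, ha, hn]; ring
    rw [this, hdsq]
    field_simp
  have hdet0 : det2 a d ≠ 0 := by
    rw [hdet]; exact neg_ne_zero.2 (by positivity)
  set s := (R * ‖y‖)⁻¹ with hs
  have hs0 : 0 < s := by positivity
  have hsC : s * C ≤ θ := by
    rw [div_lt_iff₀ (by positivity)] at hlt2
    rw [hs, inv_mul_le_iff₀ (by positivity)]
    nlinarith
  obtain ⟨hpΩ, hvp⟩ := hd.exists_ball_le hp (y := p) (by simpa using hε)
  obtain ⟨haΩ, hva⟩ := hd.exists_ball_le hp (y := p + a) (by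
    rw [add_sub_cancel_left, han]; linarith)
  have l1 : lin2 a d !₂[1, 0] = a := by simp [lin2_apply]
  have l2 : lin2 a d !₂[0, 1] = d := by simp [lin2_apply]
  have hpd : p + d = y := by simp [hddef]
  have hMA := (hd.alexandrov_right.hasMongeAmpere hd.convex_target).affine_change zero_le_one p a d
    0 hs0 0 hdet0
  refine H _ (hd.convex_right.affine_change p a d 0 hs0.le 0) (fun z => ?_) ?_ ?_ ?_
    fun E hE hEs => ?_
  · simpa using mul_nonneg hs0.le (hd.right_nonneg _)
  · simpa using (mul_le_mul_of_nonneg_left hvp hs0.le).trans hsC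
  · simpa [l1] using (mul_le_mul_of_nonneg_left hva hs0.le).trans hsC
  · have : s * v y ≤ 1 := by
      rw [hs, inv_mul_le_iff₀ (by positivity)]; linarith
    simpa [l2, hpd] using this
  · rw [hMA E hE]
    have hpre : Convex ℝ ((fun z => p + lin2 a d z) ⁻¹' closure Ω₂) := by
      have h1 := (hd.convex_target.closure.translate_preimage_right p).linear_preimage (lin2 a d)
      exact h1
    rw [inter_eq_left.2 (hEs.trans (stdTriangle_subset hpre (by simpa using hpΩ)
      (by simpa [l1] using haΩ) (by simpa [l2, hpd] using hyΩ)))]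
    gcongr
    rw [hdet, mul_one, ← mul_pow]
    have hle : ε / (4 * R) ≤ s * (ε / 2 * ‖d‖) := by
      rw [hs, inv_mul_eq_div, div_le_div_iff₀ (by positivity) (by positivity)]
      nlinarith [mul_le_mul_of_nonneg_left hdn (by positivity : 0 ≤ ε * R)]
    refine (pow_le_pow_left₀ (by positivity) hle 2).trans (le_of_eq ?_)
    ring

/-- Hölder estimate for subgradients, with an absolute exponent. -/
lemma exists_subgrad_holder : ∃ δ₀ : ℝ, 0 < δ₀ ∧ ∀ ε C R : ℝ, 0 < ε → 0 < C → 0 < R →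
    ∃ M : ℝ, 0 < M ∧ ∀ (u v : R2 → ℝ) (Ω₁ Ω₂ : Set R2), IsDualPair u v Ω₁ Ω₂ →
      HasLinearGrowth ε C u → HasLinearGrowth ε C v →
      (∀ x p, ‖x‖ ≤ R → SubgradAt u x p → ‖p‖ ≤ M) ∧
      ∀ x x' p p', ‖x‖ ≤ R → ‖x'‖ ≤ R → SubgradAt u x p → SubgradAt u x' p' →
        ‖p - p'‖ ≤ M * ‖x - x'‖ ^ δ₀ := by
  obtain ⟨θ, β, hθ, hβ, H⟩ := secDiff_lower
  refine ⟨(β - 1)⁻¹, inv_pos.2 (by linarith), fun ε C R hε hC hR => ?_⟩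
  obtain ⟨Y, hY, hbound⟩ := exists_subgrad_bound hε hC hR
  set R₀ := (1 + R * Y + C * Y + C) / ε + Y with hR₀
  have hR₀pos : 0 < R₀ := by positivity
  set M₀ := 2 * (R₀ ^ β / (2 * θ)) ^ (β - 1)⁻¹ with hM₀
  have hM₀pos : 0 < M₀ := by positivity
  refine ⟨max Y M₀, lt_max_of_lt_left hY, fun u v Ω₁ Ω₂ hd hgu hgv => ⟨fun x p hx hp =>
    (hbound u v Ω₁ Ω₂ hd hgu x p hx hp).trans (le_max_left _ _), ?_⟩⟩
  intro x x' p p' hx hx' hp hp'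
  have hpY := hbound u v Ω₁ Ω₂ hd hgu x p hx hp
  have hpY' := hbound u v Ω₁ Ω₂ hd hgu x' p' hx' hp'
  have hrpow : 0 ≤ ‖x - x'‖ ^ (β - 1)⁻¹ := by positivity
  refine le_trans ?_ (mul_le_mul_of_nonneg_right (le_max_right Y M₀) hrpow)
  rcases eq_or_ne p p' with rfl | hne
  · rw [sub_self, norm_zero]; positivity
  set m : R2 := (1 / 2 : ℝ) • p + (1 - 1 / 2 : ℝ) • p' with hm
  set w : R2 := (1 / 2 : ℝ) • (p - p') with hw
  have hmw : m + w = p := by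
    rw [hm, hw]; module
  have hmw' : m - w = p' := by
    rw [hm, hw]; module
  have hmΩ : m ∈ closure Ω₂ := hd.convex_target.closure (hd.mem_target x p hp)
    (hd.mem_target x' p' hp') (by norm_num) (by norm_num) (by norm_num)
  have hvp : v p ≤ R * Y := by
    rw [hd.eq_left x p hp]
    have := (real_inner_le_norm x p).trans (mul_le_mul hx hpY (norm_nonneg _) hR.le)
    linarith [hd.left_nonneg x]
  have hvp' : v p' ≤ R * Y := by
    rw [hd.eq_left x' p' hp']
    have := (real_inner_le_norm x' p').trans (mul_le_mul hx' hpY' (norm_nonneg _) hR.le)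
    linarith [hd.left_nonneg x']
  have hvm : v m ≤ R * Y := by
    have := hd.convex_right.le_mix p p' (t := 1 / 2) (by norm_num) (by norm_num)
    rw [← hm] at this
    linarith
  have hmY : ‖m‖ ≤ Y := by
    refine (norm_add_le _ _).trans ?_
    rw [norm_smul, norm_smul]
    norm_num
    linarith
  have hwY : ‖w‖ ≤ Y := by
    have := norm_sub_le p p'
    rw [hw, norm_smul]
    norm_num
    linarith
  have hpw : ‖p - p'‖ = 2 * ‖w‖ := by
    rw [hw, norm_smul]; norm_num; ring
  have hw0 : w ≠ 0 := by
    rw [hw]; exact smul_ne_zero (by norm_num) (sub_ne_zero.2 hne)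
  have hwpos : 0 < ‖w‖ := norm_pos_iff.2 hw0
  have hsec : ∀ y, secDiff v m y ≤ 2 → ‖y‖ ≤ R₀ := by
    intro y hy
    obtain ⟨q, hq, hgrow⟩ := hgv
    have h1 := hgrow (m + y)
    have h2 := hgrow (m - y)
    rw [inner_add_right] at h1
    rw [inner_sub_right] at h2
    have h3 : 2 * ‖y‖ ≤ ‖m + y‖ + ‖m - y‖ := by
      have := norm_sub_le (m + y) (m - y)
      rwa [add_sub_sub_cancel, ← two_smul ℝ y, norm_smul, Real.norm_two] at this
    have h4 := (abs_le.1 (abs_real_inner_le_norm q m)).1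
    have h5 : ‖q‖ * ‖m‖ ≤ C * Y := mul_le_mul hq hmY (norm_nonneg _) hC.le
    have h6 := mul_le_mul_of_nonneg_left h3 hε.le
    unfold secDiff at hy
    have h7 : ‖y‖ ≤ (1 + R * Y + C * Y + C) / ε := by
      rw [le_div_iff₀ hε]; linarith
    linarith
  have hlow := H v Ω₂ m R₀ hd.convex_right hd.convex_target hd.alexandrov_right hmΩ hR₀pos hsec
    w hw0 (hwY.trans (by rw [hR₀]; linarith [(by positivity : 0 ≤ (1 + R * Y + C * Y + C) / ε)]))
  have hup : secDiff v m w ≤ ‖x - x'‖ * ‖w‖ := by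
    have h1 := hd.young_target m hmΩ x
    have h2 := hd.young_target m hmΩ x'
    have h3 := real_inner_le_norm (x - x') w
    have h4 := hd.eq_left x p hp
    have h5 := hd.eq_left x' p' hp'
    rw [← hmw, inner_add_right] at h4
    rw [← hmw', inner_sub_right] at h5
    rw [inner_sub_left] at h3
    unfold secDiff
    linarith
  have hβ1 : 0 < β - 1 := by linarith
  have hmain : ‖w‖ ^ (β - 1) ≤ R₀ ^ β / (2 * θ) * ‖x - x'‖ := by
    have h1 := hlow.trans hup
    rw [Real.div_rpow (norm_nonneg _) hR₀pos.le] at h1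
    have h2 : ‖w‖ ^ β = ‖w‖ ^ (β - 1) * ‖w‖ := by
      rw [← Real.rpow_add_one hwpos.ne', sub_add_cancel]
    have hRβ : 0 < R₀ ^ β := Real.rpow_pos_of_pos hR₀pos β
    rw [h2, mul_div_assoc', div_le_iff₀ hRβ] at h1
    rw [div_mul_eq_mul_div, le_div_iff₀ (by positivity)]
    refine le_of_mul_le_mul_right ?_ hwpos
    linarith
  have hfin := Real.rpow_le_rpow (by positivity) hmain (inv_pos.2 hβ1).le
  rw [Real.rpow_rpow_inv (norm_nonneg _) hβ1.ne',
    Real.mul_rpow (by positivity) (norm_nonneg _)] at hfin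
  rw [hpw, hM₀]
  linarith

/-- A convex function whose subgradients are Hölder continuous near `x` is differentiable
at `x`. -/
lemma SubgradAt.hasGradientAt {f : R2 → ℝ} (hf : ConvexOn ℝ univ f) {x p : R2} {M δ R : ℝ}
    (hδ : 0 < δ) (hx : ‖x‖ < R) (hp : SubgradAt f x p)
    (h : ∀ y q, ‖y‖ ≤ R → SubgradAt f y q → ‖q - p‖ ≤ M * ‖y - x‖ ^ δ) :
    HasGradientAt f p x := by
  rw [hasGradientAt_iff_isLittleO, Asymptotics.isLittleO_iff]
  intro c hc
  have ht : Filter.Tendsto (fun y => M * ‖y - x‖ ^ δ) (nhds x) (nhds 0) := by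
    have hcont : Continuous fun y : R2 => M * ‖y - x‖ ^ δ :=
      continuous_const.mul ((by fun_prop : Continuous fun y : R2 => ‖y - x‖).rpow_const
        fun _ => Or.inr hδ.le)
    have := hcont.tendsto x
    simpa [Real.zero_rpow hδ.ne'] using this
  filter_upwards [ht.eventually_le_const hc,
    (isOpen_lt continuous_norm continuous_const).mem_nhds hx] with y hy hyR
  obtain ⟨q, hq⟩ := hf.exists_subgradAt y
  have h1 := hp y
  have h2 := hq x
  have h3 := h y q (le_of_lt hyR) hq
  have h4 := real_inner_le_norm (q - p) (y - x)
  have h5 : ⟪q, x - y⟫ = -⟪q, y - x⟫ := by rw [← inner_neg_right, neg_sub]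
  have h6 : ‖q - p‖ * ‖y - x‖ ≤ c * ‖y - x‖ :=
    mul_le_mul_of_nonneg_right (h3.trans hy) (norm_nonneg _)
  rw [inner_sub_left] at h4
  rw [Real.norm_eq_abs, abs_of_nonneg (by linarith)]
  linarith

lemma exists_gradient_holder : ∃ δ₀ : ℝ, 0 < δ₀ ∧ ∀ (ε C : ℝ) (K : Set R2), 0 < ε → 0 < C →
    IsCompact K → ∃ M : ℝ, 0 < M ∧ ∀ (u v : R2 → ℝ) (Ω₁ Ω₂ : Set R2), IsDualPair u v Ω₁ Ω₂ →
      HasLinearGrowth ε C u → HasLinearGrowth ε C v →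
      (∀ x ∈ K, DifferentiableAt ℝ u x) ∧ ContinuousOn (fun x => gradient u x) K ∧
      (∀ x ∈ K, |u x| ≤ M) ∧ (∀ x ∈ K, ‖gradient u x‖ ≤ M) ∧
      (∀ x ∈ K, ∀ y ∈ K, ‖gradient u x - gradient u y‖ ≤ M * ‖x - y‖ ^ δ₀) := by
  obtain ⟨δ₀, hδ₀, H⟩ := exists_subgrad_holder
  refine ⟨δ₀, hδ₀, fun ε C K hε hC hK => ?_⟩
  obtain ⟨r, hr⟩ := hK.isBounded.exists_norm_le
  set R := |r| + 1 with hRdef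
  have hR : 0 < R := by positivity
  have hKR : ∀ x ∈ K, ‖x‖ < R := fun x hx => by
    have := hr x hx
    have := le_abs_self r
    linarith
  obtain ⟨M, hM, hMb⟩ := H ε C R hε hC hR
  have hMR : M ≤ M * (1 + R) := by nlinarith [mul_pos hM hR]
  refine ⟨M * (1 + R), by positivity, fun u v Ω₁ Ω₂ hd hgu hgv => ?_⟩
  obtain ⟨hb, hh⟩ := hMb u v Ω₁ Ω₂ hd hgu hgv
  have hdiff : ∀ x ∈ K, DifferentiableAt ℝ u x := by
    intro x hx
    obtain ⟨p, hp⟩ := hd.convex_left.exists_subgradAt x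
    exact (hp.hasGradientAt hd.convex_left hδ₀ (hKR x hx) fun y q hy hq =>
      hh y x q p hy (hKR x hx).le hq hp).differentiableAt
  have hsub : ∀ x ∈ K, SubgradAt u x (gradient u x) := fun x hx =>
    hd.convex_left.subgradAt_gradient (hdiff x hx)
  have hhol : ∀ x ∈ K, ∀ y ∈ K,
      ‖gradient u x - gradient u y‖ ≤ M * (1 + R) * ‖x - y‖ ^ δ₀ := fun x hx y hy =>
    (hh x y _ _ (hKR x hx).le (hKR y hy).le (hsub x hx) (hsub y hy)).trans
      (mul_le_mul_of_nonneg_right hMR (by positivity))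
  refine ⟨hdiff, ?_, fun x hx => ?_, fun x hx => (hb x _ (hKR x hx).le (hsub x hx)).trans hMR,
    hhol⟩
  · intro x hx
    rw [ContinuousWithinAt, tendsto_iff_norm_sub_tendsto_zero]
    have hcont : Continuous fun y : R2 => M * (1 + R) * ‖y - x‖ ^ δ₀ :=
      continuous_const.mul ((by fun_prop : Continuous fun y : R2 => ‖y - x‖).rpow_const
        fun _ => Or.inr hδ₀.le)
    have ht := (hcont.tendsto x).mono_left (nhdsWithin_le_nhds (s := K))
    simp only [sub_self, norm_zero, Real.zero_rpow hδ₀.ne', mul_zero] at ht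
    refine squeeze_zero' (Filter.Eventually.of_forall fun _ => norm_nonneg _) ?_ ht
    filter_upwards [self_mem_nhdsWithin] with y hy
    exact hhol y hy x hx
  · rw [abs_of_nonneg (hd.left_nonneg x)]
    have h1 := hsub x hx 0
    rw [hd.left_zero, zero_sub, inner_neg_right] at h1
    have h2 := (real_inner_le_norm (gradient u x) x).trans
      (mul_le_mul (hb x _ (hKR x hx).le (hsub x hx)) (hKR x hx).le (norm_nonneg _) hM.le)
    linarith

/-- locally uniform `C^{1,δ₀}` estimate for the family `S(δ̄)`: there is an
absolute `δ₀ > 0` such that for every `δ̄ > 0` and compact `K ⊆ ℝ²` there is `C` (depending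
only on `K` and `δ̄`) bounding, for every `(u, v) ∈ S(δ̄)`, the sup of `|u|`, `|∇u|` on `K`
and the `δ₀`-Hölder seminorm of `∇u` on `K`, with `u` continuously differentiable on `K`;
and the same with `u` replaced by `v`. -/
theorem stmt_6 :
    ∃ δ₀ : ℝ, 0 < δ₀ ∧
      ∀ δb : ℝ, 0 < δb → ∀ K : Set R2, IsCompact K →
        ∃ C : ℝ, 0 < C ∧
          ∀ (u v : R2 → ℝ) (Ω₁ Ω₂ : Set R2) (L l : ℝ → ℝ) (e f : ℝ → R2),
            InSFamily δb u v Ω₁ Ω₂ L l e f →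
            ((∀ x ∈ K, DifferentiableAt ℝ u x) ∧
              ContinuousOn (fun x => gradient u x) K ∧
              (∀ x ∈ K, |u x| ≤ C) ∧ (∀ x ∈ K, ‖gradient u x‖ ≤ C) ∧
              (∀ x ∈ K, ∀ y ∈ K,
                ‖gradient u x - gradient u y‖ ≤ C * ‖x - y‖ ^ δ₀)) ∧
            ((∀ x ∈ K, DifferentiableAt ℝ v x) ∧
              ContinuousOn (fun x => gradient v x) K ∧
              (∀ x ∈ K, |v x| ≤ C) ∧ (∀ x ∈ K, ‖gradient v x‖ ≤ C) ∧
              (∀ x ∈ K, ∀ y ∈ K,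
                ‖gradient v x - gradient v y‖ ≤ C * ‖x - y‖ ^ δ₀)) := by
  obtain ⟨δ₀, hδ₀, H⟩ := exists_gradient_holder
  refine ⟨δ₀, hδ₀, fun δb hδb K hK => ?_⟩
  obtain ⟨ε, C, hε, hC, hgrow⟩ := InSFamily.exists_linearGrowth hδb
  obtain ⟨M, hM, hreg⟩ := H ε C K hε hC hK
  refine ⟨M, hM, fun u v Ω₁ Ω₂ L l e f hS => ?_⟩
  obtain ⟨hu, hv⟩ := hgrow u v Ω₁ Ω₂ L l e f hS
  exact ⟨hreg u v Ω₁ Ω₂ hS.isDualPair hu hv, hreg v u Ω₂ Ω₁ hS.isDualPair.symm hv hu⟩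
end
end

section
/- Let δ̄ > 0 and let (u, v) ∈ S(δ̄) with associated convex domains Ω₁ and Ω₂, and assume v is strictly convex on the closure of Ω₂. Let z₀ ∈ ℝ² be a point not in the closure of Ω₂ and let ℓ be an affine function with ℓ ≤ v on ℝ² and ℓ(z₀) = v(z₀) (a supporting affine function of v at z₀). Then there exists a point y₀ ∈ ∂Ω₂ such that v = ℓ on the entire infinite ray {y₀ + t(z₀ − y₀) : t ≥ 0}; in particular the contact set {v = ℓ} is a cone with vertex y₀ and ℓ is also a supporting affine function of v at y₀. -/
noncomputable section

open MeasureTheory Metric Set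
open scoped RealInnerProductSpace

/-- An affine function cannot cut a nonempty bounded cap off the contact set `{v = ⟪a, ·⟫ + d}`
away from the support `closure Ω` of the Monge–Ampère measure of `v`. -/
theorem AlexandrovSol.not_exists_contact_cap {v : R2 → ℝ} {Ω : Set R2}
    (hv : ConvexOn ℝ univ v) (hA : AlexandrovSol v Ω) {a : R2} {d : ℝ}
    (hsupp : ∀ x, ⟪a, x⟫ + d ≤ v x) {b : R2} {c : ℝ}
    (hbdd : Bornology.IsBounded {x | v x = ⟪a, x⟫ + d ∧ 0 ≤ ⟪b, x⟫ + c})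
    (hdisj : ∀ x, v x = ⟪a, x⟫ + d → 0 ≤ ⟪b, x⟫ + c → x ∉ closure Ω)
    {x₁ : R2} (hx₁ : v x₁ = ⟪a, x₁⟫ + d) (hq₁ : 0 < ⟪b, x₁⟫ + c) : False := by
  have hvc : Continuous v := continuousOn_univ.mp (hv.continuousOn isOpen_univ)
  have hcl : IsClosed {x | v x = ⟪a, x⟫ + d ∧ 0 ≤ ⟪b, x⟫ + c} :=
    (isClosed_eq hvc (g := fun x => ⟪a, x⟫ + d) (by fun_prop)).inter
      (isClosed_le continuous_const (g := fun x => ⟪b, x⟫ + c) (by fun_prop))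
  set P := {x | v x = ⟪a, x⟫ + d ∧ 0 ≤ ⟪b, x⟫ + c} with hP
  have hPc : IsCompact P := isCompact_of_isClosed_isBounded hcl hbdd
  obtain ⟨δ, hδ, hsub⟩ := hPc.exists_cthickening_subset_open
    (isClosed_closure (s := Ω)).isOpen_compl (fun x hx => hdisj x hx.1 hx.2)
  have hCc : IsCompact (cthickening δ P) := hPc.cthickening
  have hPO : P ⊆ thickening δ P := self_subset_thickening hδ P
  have hOC : thickening δ P ⊆ cthickening δ P := thickening_subset_cthickening δ P
  have hx₁P : x₁ ∈ P := ⟨hx₁, hq₁.le⟩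
  have hDc : IsCompact (cthickening δ P \ thickening δ P) := hCc.diff isOpen_thickening
  obtain ⟨m, hm, hmD⟩ : ∃ m > 0, ∀ x ∈ cthickening δ P \ thickening δ P,
      m ≤ max (v x - (⟪a, x⟫ + d)) (-(⟪b, x⟫ + c)) := by
    refine hDc.exists_forall_le' (f := fun x => max (v x - (⟪a, x⟫ + d)) (-(⟪b, x⟫ + c)))
      (by fun_prop) (fun x hx => ?_)
    by_contra! hle
    obtain ⟨h1, h2⟩ := max_le_iff.mp hle
    exact hx.2 (hPO ⟨by linarith [hsupp x], by linarith⟩)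
  obtain ⟨M, hM⟩ := hCc.isBounded.exists_norm_le
  have hM0 : 0 ≤ M := (norm_nonneg x₁).trans (hM _ (hOC (hPO hx₁P)))
  set N := ‖b‖ * M + |c| with hN
  have hN0 : 0 ≤ N := by positivity
  have hqN : ∀ x ∈ cthickening δ P, ⟪b, x⟫ + c ≤ N := fun x hx =>
    add_le_add ((real_inner_le_norm b x).trans
      (mul_le_mul_of_nonneg_left (hM x hx) (norm_nonneg b))) (le_abs_self c)
  set ε := m / (2 * (N + 1)) with hε
  have hε0 : 0 < ε := by positivity
  have hεN : ε * N ≤ m / 2 := by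
    rw [hε, div_mul_eq_mul_div, div_le_div_iff₀ (by positivity) two_pos]
    nlinarith
  set κ := min (min (m / 2) (ε * m)) (ε * (⟪b, x₁⟫ + c)) with hκ
  have hκ0 : 0 < κ := by positivity
  have hκD : ∀ x ∈ cthickening δ P \ thickening δ P,
      κ ≤ v x - (⟪a, x⟫ + d) - ε * (⟪b, x⟫ + c) := fun x hx => by
    rcases le_max_iff.mp (hmD x hx) with h | h
    · have h1 : κ ≤ m / 2 := (min_le_left _ _).trans (min_le_left _ _)
      have h2 := mul_le_mul_of_nonneg_left (hqN x hx.1) hε0.le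
      linarith
    · have h1 : κ ≤ ε * m := (min_le_left _ _).trans (min_le_right _ _)
      have h2 := mul_le_mul_of_nonneg_left h hε0.le
      linarith [hsupp x]
  have hκ1 : κ ≤ ε * (⟪b, x₁⟫ + c) := min_le_right _ _
  set r := κ / (M + 1) with hr
  have hr0 : 0 < r := by positivity
  have hball : ball (a + ε • b) r ⊆ ⋃ x ∈ thickening δ P, {p : R2 | SubgradAt v x p} := by
    intro p hp
    set s := p - (a + ε • b) with hs
    have hsr : ‖s‖ < r := by rwa [mem_ball_iff_norm] at hp
    have hps : ∀ x, ⟪p, x⟫ = ⟪a, x⟫ + ε * ⟪b, x⟫ + ⟪s, x⟫ := fun x => by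
      rw [hs, inner_sub_left, inner_add_left, real_inner_smul_left]; ring
    have hsx : ∀ x ∈ cthickening δ P, |⟪s, x⟫| < κ := fun x hx => by
      have h1 := abs_real_inner_le_norm s x
      have h2 : ‖s‖ * ‖x‖ ≤ ‖s‖ * M := mul_le_mul_of_nonneg_left (hM x hx) (norm_nonneg s)
      have h3 : r * (M + 1) = κ := by rw [hr]; field_simp
      nlinarith [norm_nonneg s]
    obtain ⟨x, hxC, hxmin⟩ := hCc.exists_isMinOn ⟨x₁, hOC (hPO hx₁P)⟩
      (f := fun x => v x - ⟪p, x⟫) (by fun_prop)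
    have hxO : x ∈ thickening δ P := by
      by_contra hxO
      have h1 := hκD x ⟨hxC, hxO⟩
      have h2 : v x - ⟪p, x⟫ ≤ v x₁ - ⟪p, x₁⟫ := hxmin (hOC (hPO hx₁P))
      rw [hps, hps] at h2
      have h3 := abs_lt.mp (hsx x hxC)
      have h4 := abs_lt.mp (hsx x₁ (hOC (hPO hx₁P)))
      linarith
    have hloc : IsLocalMin (fun x => v x - ⟪p, x⟫) x :=
      hxmin.isLocalMin (Filter.mem_of_superset (isOpen_thickening.mem_nhds hxO) hOC)
    have hconv : ConvexOn ℝ univ (fun x => v x - ⟪p, x⟫) :=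
      hv.sub ((innerSL ℝ p).toLinearMap.concaveOn convex_univ)
    have hglob := IsMinOn.of_isLocalMin_of_convex_univ hloc hconv
    refine mem_iUnion₂.mpr ⟨x, hxO, fun y => ?_⟩
    have h := hglob y
    rw [inner_sub_right]
    linarith
  have hvol := hA (thickening δ P) isOpen_thickening.measurableSet
  have hempty : thickening δ P ∩ Ω = ∅ := by
    ext x
    simp only [mem_inter_iff, mem_empty_iff_false, iff_false, not_and]
    exact fun hx hxΩ => hsub (hOC hx) (subset_closure hxΩ)
  rw [hempty, measure_empty] at hvol
  exact (measure_ball_pos volume (a + ε • b) hr0).ne' (measure_mono_null hball hvol)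

/-- Orthonormal vectors of the plane compute the norm. -/
theorem norm_sq_eq_of_orthonormal_pair {e f : R2} (he : ‖e‖ = 1) (hf : ‖f‖ = 1)
    (hef : ⟪e, f⟫ = 0) (x : R2) : ‖x‖ ^ 2 = ⟪x, e⟫ ^ 2 + ⟪x, f⟫ ^ 2 := by
  have hon : Orthonormal ℝ ![e, f] := by
    simp [orthonormal_vecCons_iff, he, hf, hef]
  have hspan : Submodule.span ℝ (range ![e, f]) = ⊤ :=
    hon.linearIndependent.span_eq_top_of_card_eq_finrank (by simp)
  have h := (OrthonormalBasis.mk hon hspan.ge).sum_sq_norm_inner_right x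
  simpa [Fin.sum_univ_two, real_inner_comm] using h.symm

/-- A convex function one of whose sections at `0` is bounded has, up to the slope of this
section, bounded sublevel sets. -/
theorem ConvexOn.isBounded_sublevel_of_section {v : R2 → ℝ} (hv : ConvexOn ℝ univ v)
    (hv0 : v 0 = 0) {p : R2} {R : ℝ} (hR : 0 < R)
    (hsec : ∀ x, v x < ⟪p, x⟫ + 1 → ‖x‖ < R) (k : ℝ) :
    Bornology.IsBounded {x | v x - ⟪p, x⟫ ≤ k} := by
  refine isBounded_iff_forall_norm_le.mpr ⟨max R (k * R), fun x hx => ?_⟩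
  by_contra! hlt
  obtain ⟨h1, h2⟩ := max_lt_iff.mp hlt
  have hx0 : 0 < ‖x‖ := hR.trans h1
  set t := R / ‖x‖ with ht
  have ht0 : 0 < t := by positivity
  have ht1 : t ≤ 1 := (div_le_one hx0).mpr h1.le
  have htx : ‖t • x‖ = R := by
    rw [norm_smul, Real.norm_of_nonneg ht0.le, ht]; field_simp
  have h3 : ⟪p, t • x⟫ + 1 ≤ v (t • x) := by
    by_contra! h
    exact (hsec _ h).ne htx
  have h4 := hv.2 (mem_univ (0 : R2)) (mem_univ x) (sub_nonneg.mpr ht1) ht0.le (by ring)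
  rw [smul_zero, zero_add, hv0, smul_zero, zero_add, smul_eq_mul] at h4
  rw [real_inner_smul_right] at h3
  have h5 : t * (v x - ⟪p, x⟫) ≤ t * k := mul_le_mul_of_nonneg_left hx ht0.le
  have h6 : t * k < 1 := by
    rw [ht, div_mul_eq_mul_div, div_lt_one hx0]; linarith
  linarith

theorem InSFamily.exists_slope_isBounded_sublevel {δb : ℝ} (hδb : 0 < δb)
    {u v : R2 → ℝ} {Ω₁ Ω₂ : Set R2} {L l : ℝ → ℝ} {e f : ℝ → R2}
    (hmem : InSFamily δb u v Ω₁ Ω₂ L l e f) :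
    ∃ p : R2, ∀ k : ℝ, Bornology.IsBounded {x | v x - ⟪p, x⟫ ≤ k} := by
  obtain ⟨-, hv, -, -, -, -, -, -, -, -, -, -, -, -, hv0, -, -, hL1, hl1, hsec⟩ := hmem
  obtain ⟨he, hf, hef, -, -, -, -, S, ⟨p, hS, -⟩, -, hSE⟩ := hsec 1 ⟨one_pos, le_rfl⟩
  refine ⟨p, hv.isBounded_sublevel_of_section hv0 (R := δb⁻¹ + 1) (by positivity)
    fun x hx => ?_⟩
  have hxS : x ∈ S := by simpa [hS, hv0] using hx
  obtain ⟨z, hz, rfl⟩ := hSE hxS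
  have hz1 : ‖z‖ ≤ 1 := by
    have h := norm_sq_eq_of_orthonormal_pair he hf hef z
    simp only [ellipse, hL1, hl1, div_one, mem_ofPred_eq] at hz
    nlinarith [norm_nonneg z]
  have hδi : 0 < δb⁻¹ := inv_pos.mpr hδb
  simp only [norm_smul, Real.norm_of_nonneg hδi.le]
  nlinarith

/-- Every affine function on the plane is an inner product plus a constant. -/
theorem exists_inner_add_eq_affineMap (ℓ : R2 →ᵃ[ℝ] ℝ) :
    ∃ (a : R2) (d : ℝ), ∀ x, ℓ x = ⟪a, x⟫ + d := by
  refine ⟨(InnerProductSpace.toDual ℝ R2).symm ℓ.linear.toContinuousLinearMap, ℓ 0, fun x => ?_⟩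
  rw [InnerProductSpace.toDual_symm_apply]
  simpa using congrFun ℓ.decomp x

/-- for `(u, v) ∈ S(δ̄)` with `v` strictly convex on `closure Ω₂`, any
supporting affine function `ℓ` of `v` at a point `z₀ ∉ closure Ω₂` coincides with `v` on an
infinite ray starting at some `y₀ ∈ ∂Ω₂` in the direction of `z₀`; the contact set
`{v = ℓ}` is a cone with vertex `y₀`, and `ℓ` also supports `v` at `y₀`. -/
theorem stmt_8 (δb : ℝ) (hδb : 0 < δb)
    (u v : R2 → ℝ) (Ω₁ Ω₂ : Set R2) (L l : ℝ → ℝ) (e f : ℝ → R2)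
    (hmem : InSFamily δb u v Ω₁ Ω₂ L l e f)
    (hsc : StrictConvexOn ℝ (closure Ω₂) v)
    (z₀ : R2) (hz₀ : z₀ ∉ closure Ω₂)
    (ℓ : R2 →ᵃ[ℝ] ℝ) (hsupp : ∀ x : R2, ℓ x ≤ v x) (htouch : ℓ z₀ = v z₀) :
    ∃ y₀ ∈ frontier Ω₂,
      (∀ t : ℝ, 0 ≤ t → v (y₀ + t • (z₀ - y₀)) = ℓ (y₀ + t • (z₀ - y₀))) ∧
      (∀ x : R2, v x = ℓ x → ∀ t : ℝ, 0 ≤ t →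
        v (y₀ + t • (x - y₀)) = ℓ (y₀ + t • (x - y₀))) ∧
      ℓ y₀ = v y₀ := by
  obtain ⟨p, hp⟩ := hmem.exists_slope_isBounded_sublevel hδb
  obtain ⟨-, hv, -, -, -, -, -, -, -, -, -, -, -, hA, -⟩ := hmem
  obtain ⟨a, d, had⟩ := exists_inner_add_eq_affineMap ℓ
  have hvc : Continuous v := continuousOn_univ.mp (hv.continuousOn isOpen_univ)
  simp only [had] at hsupp htouch ⊢
  set K := {x | v x = ⟪a, x⟫ + d} with hK
  have hKcl : IsClosed K := isClosed_eq hvc (by fun_prop)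
  have hKconv : Convex ℝ K := by
    intro x hx y hy s t hs ht hst
    refine le_antisymm ?_ (hsupp _)
    have h := hv.2 (mem_univ x) (mem_univ y) hs ht hst
    rw [mem_ofPred_eq.mp hx, mem_ofPred_eq.mp hy, smul_eq_mul, smul_eq_mul] at h
    rw [inner_add_right, real_inner_smul_right, real_inner_smul_right]
    linear_combination h + d * hst
  have huniq : ∀ x ∈ K, ∀ y ∈ K, x ∈ closure Ω₂ → y ∈ closure Ω₂ → x = y := by
    intro x hx y hy hxΩ hyΩ
    by_contra hne
    have h := hsc.2 hxΩ hyΩ hne one_half_pos one_half_pos (add_halves 1)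
    have h' := hKconv hx hy one_half_pos.le one_half_pos.le (add_halves 1)
    rw [mem_ofPred_eq.mp h', mem_ofPred_eq.mp hx, mem_ofPred_eq.mp hy, smul_eq_mul, smul_eq_mul,
      inner_add_right, real_inner_smul_right, real_inner_smul_right] at h
    linarith
  have hz₀K : z₀ ∈ K := htouch.symm
  obtain ⟨y₀, hy₀K, hy₀Ω⟩ : ∃ y ∈ K, y ∈ closure Ω₂ := by
    by_contra! hno
    refine hA.not_exists_contact_cap hv hsupp (b := p - a) (c := ⟪a - p, z₀⟫ + 1)
      ((hp (⟪a - p, z₀⟫ + 1 + d)).subset ?_) (fun x hx _ => hno x hx) hz₀K ?_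
    · rintro x ⟨hx, hq⟩
      rw [inner_sub_left] at hq
      rw [mem_ofPred_eq, hx]
      linarith
    · simp only [inner_sub_left]
      linarith
  have hcone : ∀ x ∈ K, ∀ t : ℝ, 0 ≤ t → y₀ + t • (x - y₀) ∈ K := by
    intro x hx t ht
    by_contra hnot
    obtain ⟨φ, s, hφK, hφs⟩ := geometric_hahn_banach_closed_point hKconv hKcl hnot
    obtain ⟨b, hb⟩ : ∃ b : R2, ∀ y, φ y = ⟪b, y⟫ :=
      ⟨(InnerProductSpace.toDual ℝ R2).symm φ, fun y => by
        rw [InnerProductSpace.toDual_symm_apply]⟩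
    simp only [hb] at hφK hφs
    have hpos : 0 < ⟪b, x⟫ - ⟪b, y₀⟫ := by
      rw [inner_add_right, real_inner_smul_right, inner_sub_right] at hφs
      by_contra! hle
      linarith [hφK y₀ hy₀K, mul_nonpos_of_nonneg_of_nonpos ht hle]
    set A := ⟪b, x⟫ - ⟪b, y₀⟫ with hAdef
    set G := ⟪a - p, x⟫ - ⟪a - p, y₀⟫ with hG
    obtain ⟨ε, hε, hεG⟩ : ∃ ε > 0, ε * G < A / 2 := by
      refine ⟨A / (2 * (|G| + 1)), by positivity, ?_⟩
      rw [div_mul_eq_mul_div, div_lt_div_iff₀ (by positivity) two_pos]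
      nlinarith [le_abs_self G]
    refine hA.not_exists_contact_cap hv hsupp (b := b - ε • (a - p))
      (c := -⟪b - ε • (a - p), y₀⟫ - A / 4)
      ((hp ((s - ⟪b, y₀⟫) / ε + ⟪a - p, y₀⟫ + d)).subset ?_) ?_ hx ?_
    · rintro y ⟨hy, hq⟩
      have hys := hφK y hy
      simp only [inner_sub_left, real_inner_smul_left] at hq
      rw [mem_ofPred_eq, hy, ← sub_le_iff_le_add, ← sub_le_iff_le_add, le_div_iff₀ hε]
      simp only [inner_sub_left]
      linarith
    · intro y hy hq hyΩ
      obtain rfl := huniq y hy y₀ hy₀K hyΩ hy₀Ω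
      linarith
    · simp only [inner_sub_left, real_inner_smul_left, hG, hAdef] at hεG hpos ⊢
      linarith
  refine ⟨y₀, ⟨hy₀Ω, fun hint => ?_⟩, hcone z₀ hz₀K, hcone, hy₀K.symm⟩
  have hlim : Filter.Tendsto (fun t : ℝ => y₀ + t • (z₀ - y₀)) (nhdsWithin 0 (Ioi 0))
      (nhds y₀) := by
    have h : Continuous fun t : ℝ => y₀ + t • (z₀ - y₀) := by fun_prop
    simpa using (h.tendsto 0).mono_left nhdsWithin_le_nhds
  obtain ⟨t, htΩ, ht⟩ := ((hlim.eventually (isOpen_interior.mem_nhds hint)).and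
    self_mem_nhdsWithin).exists
  have ht0 : (0 : ℝ) < t := ht
  have h := huniq _ (hcone z₀ hz₀K t ht0.le) y₀ hy₀K
    (subset_closure (interior_subset htΩ)) hy₀Ω
  have hz : z₀ = y₀ := by simpa [ht0.ne', sub_eq_zero] using h
  exact hz₀ (hz ▸ hy₀Ω)
end
end
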